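/- The squared ℓ² norm of the Jacobi polynomial iteration satisfies the sharp asymptotic equivalence: n^d · ∑_{v∈ℤ^d} x_n(v)² converges, as n → ∞, to Γ(d/2+1)/(π^{d/2} (det Q)^{1/2}) (equivalently, to 1/((det Q)^{1/2} |B(0,1)|) where |B(0,1)| = π^{d/2}/Γ(d/2+1) is the volume of the Euclidean unit ball in ℝ^d). -/

import Mathlib

open MeasureTheory Matrix Filter Topology Real

noncomputable section

def latticeConv {d : ℕ} (ω x : (Fin d → ℤ) → ℝ) : (Fin d → ℤ) → ℝ :=
  fun v => ∑' η : Fin d → ℤ, ω (v - η) * x η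

def covQ (d : ℕ) (ω : (Fin d → ℤ) → ℝ) : Matrix (Fin d) (Fin d) ℝ :=
  Matrix.of fun i j => ∑' v : Fin d → ℤ, ω v * (v i : ℝ) * (v j : ℝ)

def ftOmega {d : ℕ} (ω : (Fin d → ℤ) → ℝ) (ξ : Fin d → ℝ) : ℂ :=
  ∑' v : Fin d → ℤ, (ω v : ℂ) * Complex.exp (Complex.I * ((∑ i, ξ i * (v i : ℝ) : ℝ) : ℂ))

def aCoef0 (d : ℕ) : ℝ := ((d : ℝ) + 4) / (2 * (2 + (d : ℝ)))
def bCoef0 (d : ℕ) : ℝ := (d : ℝ) / (2 * (2 + (d : ℝ)))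
def aCoef (d n : ℕ) : ℝ :=
  (2 * (n : ℝ) + (d : ℝ)/2 + 1) * (2 * (n : ℝ) + (d : ℝ)/2 + 2) / (2 * ((n : ℝ) + 1 + (d : ℝ)/2)^2)
def bCoef (d n : ℕ) : ℝ :=
  (d : ℝ)^2 * (2 * (n : ℝ) + (d : ℝ)/2 + 1) / (8 * ((n : ℝ) + 1 + (d : ℝ)/2)^2 * (2 * (n : ℝ) + (d : ℝ)/2))
def cCoef (d n : ℕ) : ℝ :=
  (n : ℝ)^2 * (2 * (n : ℝ) + (d : ℝ)/2 + 2) / (((n : ℝ) + 1 + (d : ℝ)/2)^2 * (2 * (n : ℝ) + (d : ℝ)/2))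

def besselJ (ν z : ℝ) : ℝ :=
  ∑' m : ℕ, ((-1 : ℝ)^m / ((m.factorial : ℝ) * Real.Gamma ((m : ℝ) + ν + 1))) * (z / 2) ^ (2 * (m : ℝ) + ν)

def jacobiP (α β : ℝ) (n : ℕ) (x : ℝ) : ℝ :=
  ∑ s ∈ Finset.range (n + 1),
    (Real.Gamma ((n : ℝ) + α + 1) / (Real.Gamma (α + (s : ℝ) + 1) * ((n - s).factorial : ℝ))) *
    (Real.Gamma ((n : ℝ) + β + 1) / (Real.Gamma ((n : ℝ) + β - (s : ℝ) + 1) * (s.factorial : ℝ))) *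
    ((x - 1) / 2) ^ s * ((x + 1) / 2) ^ (n - s)

def jacobiPi (α β : ℝ) (n : ℕ) (x : ℝ) : ℝ := jacobiP α β n x / jacobiP α β n 1

def pd {d : ℕ} (j : Fin d) (g : (Fin d → ℝ) → ℝ) : (Fin d → ℝ) → ℝ :=
  fun y => deriv (fun s => g (Function.update y j s)) (y j)

/-!
By Plancherel on the torus, `∑ x_n(v)²` is the mean over `[-π, π]^d` of the squared symbol of `x_n`.
The recursion is that of the Jacobi polynomials `P_n^{(d/2, 0)}`, so this symbol is the polynomial
normalised at its endpoint, evaluated at `ω̂`. Substituting `ξ = y / n` turns `n ^ d` into the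
Jacobian, and `1 - ω̂(ξ) ∼ ⟨ξ, Q ξ⟩ / 2` makes the integrand converge to the square of a
Bessel–Clifford function of `⟨y, Q y⟩` (Mehler–Heine). Domination comes from Sonin's function of the
Jacobi equation, which is monotone once the frequency of the Liouville normal form is positive and
yields the integrable majorant `(1 + |y|²) ^ (-(d + 1) / 2)`. The Bessel–Clifford function of order
`d / 2` is, up to the volume of the ball, the Fourier transform of the indicator of the unit ball,
so Plancherel on `ℝ^d` evaluates the limit.
-/

section JacobiPolynomial

open Polynomial Finset

variable {α : ℝ} {n : ℕ}

lemma ascPochhammer_eval_succ_left (k : ℕ) (x : ℝ) :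
    (ascPochhammer ℝ (k + 1)).eval x = x * (ascPochhammer ℝ k).eval (x + 1) := by
  simp [ascPochhammer_succ_left]

/-- The `k`-th coefficient of `₂F₁(-n, n + α + 1; α + 1; X)`, see `normalizedJacobi`. -/
def jacobiCoeff (α : ℝ) (n k : ℕ) : ℝ :=
  ordinaryHypergeometricCoefficient (-(n : ℝ)) (n + α + 1) (α + 1) k

@[simp]
lemma jacobiCoeff_zero_right (α : ℝ) (n : ℕ) : jacobiCoeff α n 0 = 1 := by
  simp [jacobiCoeff, ordinaryHypergeometricCoefficient]

lemma jacobiCoeff_eq_zero_of_lt (α : ℝ) {k : ℕ} (h : n < k) : jacobiCoeff α n k = 0 := by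
  simp [jacobiCoeff, ordinaryHypergeometricCoefficient, ascPochhammer_eval_neg_coe_nat_of_lt h]

lemma jacobiCoeff_succ_mul (hα : -1 < α) (n k : ℕ) :
    (k + 1) * (α + 1 + k) * jacobiCoeff α n (k + 1) =
      (k - n) * (n + α + 1 + k) * jacobiCoeff α n k := by
  have := ascPochhammer_pos k (α + 1) (by linarith)
  have : 0 < α + 1 + k := by linarith [Nat.cast_nonneg (α := ℝ) k]
  simp only [jacobiCoeff, ordinaryHypergeometricCoefficient, ascPochhammer_succ_eval,
    Nat.factorial_succ, Nat.cast_mul, Nat.cast_succ]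
  field_simp
  ring

lemma jacobiCoeff_succ (hα : -1 < α) (n k : ℕ) :
    jacobiCoeff α n (k + 1) =
      jacobiCoeff α n k * ((k - n) * (n + α + 1 + k) / ((k + 1) * (α + 1 + k))) := by
  have : 0 < α + 1 + k := by linarith [Nat.cast_nonneg (α := ℝ) k]
  field_simp
  linear_combination jacobiCoeff_succ_mul hα n k

lemma abs_jacobiCoeff_le (hα : 0 ≤ α) (n k : ℕ) :
    |jacobiCoeff α n k| ≤ (2 * (n : ℝ) ^ 2) ^ k / k.factorial := by
  induction k with
  | zero => simp
  | succ k ih =>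
    rcases lt_or_ge n (k + 1) with hk | hk
    · rw [jacobiCoeff_eq_zero_of_lt α hk, abs_zero]
      positivity
    have hk' : (k : ℝ) + 1 ≤ n := mod_cast hk
    have ratio : |(k - n : ℝ) * (n + α + 1 + k) / ((k + 1) * (α + 1 + k))| ≤
        2 * (n : ℝ) ^ 2 / (k + 1) := by
      rw [← div_div, div_right_comm, abs_div, abs_of_pos (by positivity : 0 < (k : ℝ) + 1),
        abs_div, abs_of_pos (by positivity : 0 < α + 1 + k), abs_mul, abs_sub_comm,
        abs_of_nonneg (by linarith : (0 : ℝ) ≤ n - k),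
        abs_of_nonneg (by positivity : (0 : ℝ) ≤ n + α + 1 + k)]
      gcongr
      rw [div_le_iff₀ (by positivity)]
      calc (n - k : ℝ) * (n + α + 1 + k) ≤ n * (2 * n * (α + 1 + k)) := by
            gcongr
            · linarith
            · nlinarith [mul_nonneg hα (by linarith : (0 : ℝ) ≤ 2 * n - 1)]
        _ = 2 * (n : ℝ) ^ 2 * (α + 1 + k) := by ring
    calc |jacobiCoeff α n (k + 1)|
        ≤ (2 * (n : ℝ) ^ 2) ^ k / k.factorial * (2 * (n : ℝ) ^ 2 / (k + 1)) := by
          rw [jacobiCoeff_succ (by linarith), abs_mul]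
          gcongr
      _ = (2 * (n : ℝ) ^ 2) ^ (k + 1) / (k + 1).factorial := by
          rw [Nat.factorial_succ, pow_succ _ k, div_mul_div_comm, Nat.cast_mul, Nat.cast_succ,
            mul_comm (k.factorial : ℝ)]

lemma jacobiCoeff_three_term (d n k : ℕ) :
    jacobiCoeff (d / 2) (n + 2) (k + 1) = jacobiCoeff (d / 2) (n + 1) (k + 1) +
      cCoef d (n + 1) * (jacobiCoeff (d / 2) (n + 1) (k + 1) - jacobiCoeff (d / 2) n (k + 1)) -
      2 * aCoef d (n + 1) * jacobiCoeff (d / 2) (n + 1) k := by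
  have := ascPochhammer_pos k (d / 2 + 1 : ℝ) (by positivity)
  set D := (ascPochhammer ℝ k).eval (-(n + 1) : ℝ) with hD
  set R := (ascPochhammer ℝ k).eval (n + 1 + d / 2 + 1 : ℝ) with hR
  have d₀ : (ascPochhammer ℝ (k + 1)).eval (-n : ℝ) =
      D * (-(n + 1) + k) * (-n + k) / (-(n + 1)) := by
    have h := ascPochhammer_eval_succ_left (k + 1) (-(n + 1) : ℝ)
    rw [ascPochhammer_succ_eval, ascPochhammer_succ_eval, neg_add_rev, neg_add_cancel_comm] at h
    rw [eq_div_iff (by linarith [Nat.cast_nonneg (α := ℝ) n])]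
    push_cast at h
    rw [hD, neg_add_rev]
    linear_combination -h
  have d₂ : (ascPochhammer ℝ (k + 1)).eval (-(n + 2) : ℝ) = -(n + 2) * D := by
    rw [ascPochhammer_eval_succ_left, hD]
    ring_nf
  have r₀ : (ascPochhammer ℝ (k + 1)).eval (n + d / 2 + 1 : ℝ) = (n + d / 2 + 1) * R := by
    rw [ascPochhammer_eval_succ_left, hR]
    ring_nf
  have r₂ : (ascPochhammer ℝ (k + 1)).eval (n + 2 + d / 2 + 1 : ℝ) =
      R * (n + 1 + d / 2 + 1 + k) * (n + 1 + d / 2 + 1 + k + 1) / (n + 1 + d / 2 + 1) := by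
    have h := ascPochhammer_eval_succ_left (k + 1) (n + 1 + d / 2 + 1 : ℝ)
    rw [ascPochhammer_succ_eval, ascPochhammer_succ_eval] at h
    rw [eq_div_iff (by positivity), show (n + 2 + d / 2 + 1 : ℝ) = n + 1 + d / 2 + 1 + 1 by ring]
    push_cast at h
    linear_combination -h
  simp only [jacobiCoeff, ordinaryHypergeometricCoefficient, Nat.cast_add, Nat.cast_one,
    Nat.cast_ofNat, d₀, d₂, r₀, r₂, ascPochhammer_succ_eval k (-(n + 1) : ℝ),
    ascPochhammer_succ_eval k (n + 1 + d / 2 + 1 : ℝ), ascPochhammer_succ_eval k (d / 2 + 1 : ℝ),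
    ← hD, ← hR, Nat.factorial_succ, Nat.cast_mul, aCoef, cCoef]
  have : (-(n + 1) : ℝ) ≠ 0 := by linarith [Nat.cast_nonneg (α := ℝ) n]
  field_simp
  ring

/-- The Jacobi polynomial `P_n^{(α,0)}`, normalised to take the value `1` at the endpoint `1` and
written in the variable `x = (1 - λ) / 2`, which moves that endpoint to `0`. -/
def normalizedJacobi (α : ℝ) (n : ℕ) : ℝ[X] :=
  ∑ k ∈ range (n + 1), monomial k (jacobiCoeff α n k)

@[simp]
lemma coeff_normalizedJacobi (α : ℝ) (n k : ℕ) :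
    (normalizedJacobi α n).coeff k = jacobiCoeff α n k := by
  simp only [normalizedJacobi, finsetSum_coeff, coeff_monomial, sum_ite_eq', mem_range]
  split_ifs with h
  · rfl
  · exact (jacobiCoeff_eq_zero_of_lt α (by lia)).symm

lemma normalizedJacobi_ode (hα : -1 < α) (n : ℕ) :
    X * (1 - X) * derivative (derivative (normalizedJacobi α n)) +
      (C (α + 1) - C (α + 2) * X) * derivative (normalizedJacobi α n) +
      C (n * (n + α + 1)) * normalizedJacobi α n = 0 := by
  have expand : X * (1 - X) * derivative (derivative (normalizedJacobi α n)) +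
      (C (α + 1) - C (α + 2) * X) * derivative (normalizedJacobi α n) +
      C (n * (n + α + 1)) * normalizedJacobi α n =
      X * derivative (derivative (normalizedJacobi α n)) -
      X * (X * derivative (derivative (normalizedJacobi α n))) +
      C (α + 1) * derivative (normalizedJacobi α n) -
      C (α + 2) * (X * derivative (normalizedJacobi α n)) +
      C (n * (n + α + 1)) * normalizedJacobi α n := by ring
  rw [expand]
  ext k
  have hrec := jacobiCoeff_succ_mul hα n
  rcases k with _ | _ | k <;>
    simp only [coeff_add, coeff_sub, coeff_C_mul, coeff_derivative, coeff_X_mul_zero, coeff_X_mul,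
      coeff_normalizedJacobi, coeff_zero, Nat.cast_add, Nat.cast_zero, Nat.cast_one, zero_add]
  · have h := hrec 0
    push_cast at h
    linear_combination h
  · have h := hrec 1
    push_cast at h
    linear_combination h
  · have h := hrec (k + 2)
    push_cast at h
    linear_combination h

lemma aCoef_add_bCoef_sub_cCoef (d n : ℕ) :
    aCoef d (n + 1) + bCoef d (n + 1) - cCoef d (n + 1) = 1 := by
  unfold aCoef bCoef cCoef
  push_cast
  field_simp
  ring

lemma normalizedJacobi_zero (α : ℝ) : normalizedJacobi α 0 = 1 := by
  simp [normalizedJacobi]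

lemma normalizedJacobi_one (d : ℕ) :
    normalizedJacobi (d / 2) 1 = C (aCoef0 d) * (1 - 2 * X) + C (bCoef0 d) := by
  have expand : C (aCoef0 d) * (1 - 2 * X) + C (bCoef0 d) =
      C (aCoef0 d + bCoef0 d) - C (2 * aCoef0 d) * X := by
    simp only [map_add, map_mul, C_ofNat]
    ring
  have hα : (-1 : ℝ) < d / 2 := by linarith [Nat.cast_nonneg (α := ℝ) d]
  rw [expand]
  ext k
  rcases k with _ | _ | k
  · have : aCoef0 d + bCoef0 d = 1 := by
      unfold aCoef0 bCoef0
      field_simp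
      ring
    simp [this]
  · have : jacobiCoeff (d / 2) 1 1 = -(2 * aCoef0 d) := by
      rw [jacobiCoeff_succ hα, jacobiCoeff_zero_right, aCoef0]
      push_cast
      field_simp
      ring
    simp [this]
  · simp [jacobiCoeff_eq_zero_of_lt]

lemma normalizedJacobi_add_two (d n : ℕ) :
    normalizedJacobi (d / 2) (n + 2) =
      C (aCoef d (n + 1)) * ((1 - 2 * X) * normalizedJacobi (d / 2) (n + 1)) +
      C (bCoef d (n + 1)) * normalizedJacobi (d / 2) (n + 1) -
      C (cCoef d (n + 1)) * normalizedJacobi (d / 2) n := by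
  have hb : bCoef d (n + 1) = 1 + cCoef d (n + 1) - aCoef d (n + 1) := by
    linarith [aCoef_add_bCoef_sub_cCoef d n]
  have expand : C (aCoef d (n + 1)) * ((1 - 2 * X) * normalizedJacobi (d / 2) (n + 1)) =
      C (aCoef d (n + 1)) * normalizedJacobi (d / 2) (n + 1) -
      C (2 * aCoef d (n + 1)) * (X * normalizedJacobi (d / 2) (n + 1)) := by
    simp only [map_mul, C_ofNat]
    ring
  rw [expand]
  ext (_ | k) <;>
    simp only [coeff_add, coeff_sub, coeff_C_mul, coeff_X_mul_zero, coeff_X_mul,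
      coeff_normalizedJacobi, jacobiCoeff_zero_right, jacobiCoeff_three_term, hb] <;>
    ring

lemma abs_eval_le_mul_exp {p : ℝ[X]} {a R : ℝ} (ha : 0 ≤ a) (hR : 0 ≤ R)
    (h : ∀ k, |p.coeff k| ≤ a * (R ^ k / k.factorial)) (x : ℝ) :
    |p.eval x| ≤ a * Real.exp (R * |x|) := by
  calc |p.eval x| ≤ ∑ k ∈ range (p.natDegree + 1), |p.coeff k * x ^ k| := by
        rw [eval_eq_sum_range]
        exact abs_sum_le_sum_abs _ _
    _ ≤ ∑ k ∈ range (p.natDegree + 1), a * ((R * |x|) ^ k / k.factorial) := by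
        gcongr with k
        rw [abs_mul, abs_pow, mul_pow, mul_div_right_comm, ← mul_assoc]
        gcongr
        exact h k
    _ ≤ a * Real.exp (R * |x|) := by
        rw [← mul_sum]
        gcongr
        exact Real.sum_le_exp_of_nonneg (by positivity) _

lemma abs_eval_normalizedJacobi_le (hα : 0 ≤ α) (n : ℕ) (x : ℝ) :
    |(normalizedJacobi α n).eval x| ≤ Real.exp (2 * n ^ 2 * |x|) := by
  simpa using abs_eval_le_mul_exp (p := normalizedJacobi α n) zero_le_one
    (by positivity : (0 : ℝ) ≤ 2 * n ^ 2) (fun k ↦ by simpa using abs_jacobiCoeff_le hα n k) x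

lemma abs_eval_derivative_normalizedJacobi_le (hα : 0 ≤ α) (n : ℕ) (x : ℝ) :
    |(derivative (normalizedJacobi α n)).eval x| ≤
      2 * n ^ 2 * Real.exp (2 * n ^ 2 * |x|) := by
  refine abs_eval_le_mul_exp (by positivity) (by positivity) (fun k ↦ ?_) x
  have hk : (0 : ℝ) < k + 1 := by positivity
  rw [coeff_derivative, coeff_normalizedJacobi, abs_mul, abs_of_pos hk]
  calc |jacobiCoeff α n (k + 1)| * (k + 1 : ℝ)
      ≤ (2 * (n : ℝ) ^ 2) ^ (k + 1) / (k + 1).factorial * (k + 1) := by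
        gcongr
        exact abs_jacobiCoeff_le hα n (k + 1)
    _ = 2 * n ^ 2 * ((2 * (n : ℝ) ^ 2) ^ k / k.factorial) := by
        rw [Nat.factorial_succ, pow_succ _ k]
        push_cast
        field_simp

end JacobiPolynomial

section Sonin

open Polynomial

variable {α : ℝ} {n : ℕ} {x : ℝ}

lemma antitoneOn_add_div_of_hasDerivAt {D : Set ℝ} (hD : Convex ℝ D) {A A' B φ φ' : ℝ → ℝ}
    (hA : ∀ x ∈ D, HasDerivAt A (A' x) x) (hB : ∀ x ∈ D, HasDerivAt B (-(φ x * A' x)) x)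
    (hφ : ∀ x ∈ D, HasDerivAt φ (φ' x) x) (hB₀ : ∀ x ∈ D, 0 ≤ B x) (hφ₀ : ∀ x ∈ D, 0 < φ x)
    (hφ' : ∀ x ∈ D, 0 ≤ φ' x) : AntitoneOn (fun x ↦ A x + B x / φ x) D := by
  have deriv_eq (x : ℝ) (hx : x ∈ D) :
      HasDerivAt (fun x ↦ A x + B x / φ x) (-(B x * φ' x / φ x ^ 2)) x := by
    have := (hφ₀ x hx).ne'
    convert! (hA x hx).add ((hB x hx).div (hφ x hx) this) using 1
    field_simp
    ring
  refine antitoneOn_of_hasDerivWithinAt_nonpos hD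
    (fun x hx ↦ (deriv_eq x hx).continuousAt.continuousWithinAt)
    (fun x hx ↦ (deriv_eq x (interior_subset hx)).hasDerivWithinAt) fun x hx ↦ ?_
  have hx := interior_subset hx
  have := hB₀ x hx
  have := hφ' x hx
  exact neg_nonpos.2 (by positivity)

/-- The weight `x ^ (α + 1/2) * (1 - x) ^ (1/2)` under whose square root the Jacobi equation loses
its first-order term in the angular variable. -/
def jacobiWeight (α x : ℝ) : ℝ := x ^ (α + 1 / 2) * (1 - x) ^ (1 / 2 : ℝ)

/-- Half the logarithmic derivative of `jacobiWeight`. -/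
def jacobiDrift (α x : ℝ) : ℝ := (2 * α + 1) / (4 * x) - 1 / (4 * (1 - x))

/-- The derivative of the Jacobi polynomial twisted by the weight, i.e. `(√W p)' / √W` where `W` is
`jacobiWeight` and `p` is `normalizedJacobi`. -/
def jacobiTwistedDeriv (α : ℝ) (n : ℕ) (x : ℝ) : ℝ :=
  (derivative (normalizedJacobi α n)).eval x + jacobiDrift α x * (normalizedJacobi α n).eval x

/-- The squared frequency of the Jacobi equation in Liouville normal form. -/
def jacobiFrequency (α : ℝ) (n : ℕ) (x : ℝ) : ℝ :=
  (n + (α + 1) / 2) ^ 2 - (α ^ 2 - 1 / 4) / (4 * x) + 1 / (16 * (1 - x))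

/-- Sonin's function of the Jacobi equation: the squared weighted amplitude plus the squared
weighted velocity divided by the squared frequency. -/
def jacobiSonin (α : ℝ) (n : ℕ) (x : ℝ) : ℝ :=
  jacobiWeight α x * (normalizedJacobi α n).eval x ^ 2 +
    jacobiWeight α x * (x * (1 - x)) * jacobiTwistedDeriv α n x ^ 2 / jacobiFrequency α n x

lemma jacobiWeight_pos (hx : x ∈ Set.Ioo 0 1) : 0 < jacobiWeight α x :=
  mul_pos (rpow_pos_of_pos hx.1 _) (rpow_pos_of_pos (sub_pos.2 hx.2) _)

lemma hasDerivAt_jacobiWeight (hx : x ∈ Set.Ioo 0 1) :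
    HasDerivAt (jacobiWeight α) (2 * jacobiDrift α x * jacobiWeight α x) x := by
  have hx₀ := hx.1
  have hx₁ := sub_pos.2 hx.2
  convert! ((hasDerivAt_id' x).rpow_const (p := α + 1 / 2) (.inl hx₀.ne')).mul
    (((hasDerivAt_id' x).const_sub 1).rpow_const (p := 1 / 2) (.inl hx₁.ne')) using 1
  rw [rpow_sub_one hx₀.ne', rpow_sub_one hx₁.ne', jacobiDrift, jacobiWeight]
  field_simp
  ring

lemma hasDerivAt_jacobiDrift (hx : x ∈ Set.Ioo 0 1) :
    HasDerivAt (jacobiDrift α) (-((2 * α + 1) / (4 * x ^ 2)) - 1 / (4 * (1 - x) ^ 2)) x := by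
  have hx₀ := hx.1.ne'
  have hx₁ := (sub_pos.2 hx.2).ne'
  convert! ((hasDerivAt_const x (2 * α + 1)).div ((hasDerivAt_id' x).const_mul 4)
    (mul_ne_zero four_ne_zero hx₀)).sub ((hasDerivAt_const x (1 : ℝ)).div
    (((hasDerivAt_id' x).const_sub 1).const_mul 4) (mul_ne_zero four_ne_zero hx₁)) using 1
  field_simp
  ring

lemma hasDerivAt_jacobiFrequency (hx : x ∈ Set.Ioo 0 1) :
    HasDerivAt (jacobiFrequency α n)
      ((α ^ 2 - 1 / 4) / (4 * x ^ 2) + 1 / (16 * (1 - x) ^ 2)) x := by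
  have hx₀ := hx.1.ne'
  have hx₁ := (sub_pos.2 hx.2).ne'
  convert! ((hasDerivAt_const x ((n + (α + 1) / 2) ^ 2)).sub
    ((hasDerivAt_const x (α ^ 2 - 1 / 4)).div ((hasDerivAt_id' x).const_mul 4)
    (mul_ne_zero four_ne_zero hx₀))).add ((hasDerivAt_const x (1 : ℝ)).div
    (((hasDerivAt_id' x).const_sub 1).const_mul 16) (mul_ne_zero (by norm_num) hx₁)) using 1
  field_simp
  ring

lemma hasDerivAt_jacobiTwistedDeriv (hx : x ∈ Set.Ioo 0 1) :
    HasDerivAt (jacobiTwistedDeriv α n)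
      ((derivative (derivative (normalizedJacobi α n))).eval x +
        ((-((2 * α + 1) / (4 * x ^ 2)) - 1 / (4 * (1 - x) ^ 2)) * (normalizedJacobi α n).eval x +
          jacobiDrift α x * (derivative (normalizedJacobi α n)).eval x)) x :=
  ((derivative _).hasDerivAt x).add ((hasDerivAt_jacobiDrift hx).mul (Polynomial.hasDerivAt _ x))

lemma hasDerivAt_jacobiWeight_mul_sq (hx : x ∈ Set.Ioo 0 1) :
    HasDerivAt (fun x ↦ jacobiWeight α x * (normalizedJacobi α n).eval x ^ 2)
      (2 * jacobiWeight α x * (normalizedJacobi α n).eval x * jacobiTwistedDeriv α n x) x := by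
  convert! (hasDerivAt_jacobiWeight hx).mul
    (((normalizedJacobi α n).hasDerivAt x).fun_pow 2) using 1
  rw [jacobiTwistedDeriv]
  push_cast
  ring

lemma hasDerivAt_jacobiWeight_mul_twistedDeriv_sq (hα : -1 < α) (hx : x ∈ Set.Ioo 0 1) :
    HasDerivAt (fun x ↦ jacobiWeight α x * (x * (1 - x)) * jacobiTwistedDeriv α n x ^ 2)
      (-(jacobiFrequency α n x *
        (2 * jacobiWeight α x * (normalizedJacobi α n).eval x * jacobiTwistedDeriv α n x))) x := by
  have hx₀ := hx.1.ne'
  have hx₁ := (sub_pos.2 hx.2).ne'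
  have ode := congrArg (eval x) (normalizedJacobi_ode hα n)
  simp only [eval_add, eval_sub, eval_mul, eval_X, eval_C, eval_one, eval_zero] at ode
  convert! ((hasDerivAt_jacobiWeight hx).fun_mul
    ((hasDerivAt_id' x).fun_mul ((hasDerivAt_id' x).const_sub 1))).fun_mul
    ((hasDerivAt_jacobiTwistedDeriv (α := α) (n := n) hx).fun_pow 2) using 1
  generalize jacobiWeight α x = W
  simp only [jacobiTwistedDeriv, jacobiFrequency, jacobiDrift] at *
  generalize (normalizedJacobi α n).eval x = p₀ at *
  generalize (derivative (normalizedJacobi α n)).eval x = p₁ at *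
  generalize (derivative (derivative (normalizedJacobi α n))).eval x = p₂ at *
  obtain rfl : p₂ = -((α + 1 - (α + 2) * x) * p₁ + n * (n + α + 1) * p₀) / (x * (1 - x)) := by
    field_simp
    linear_combination ode
  push_cast
  field_simp
  ring

lemma half_sq_le_jacobiFrequency (hα : 1 / 2 ≤ α) (hn : n ≠ 0)
    (hx : x ∈ Set.Ico (α ^ 2 / n ^ 2) 1) : (n : ℝ) ^ 2 / 2 ≤ jacobiFrequency α n x := by
  have hx₀ : 0 < x := lt_of_lt_of_le (by positivity) hx.1
  have hx₁ := sub_pos.2 hx.2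
  have hpot : (α ^ 2 - 1 / 4) / (4 * x) ≤ n ^ 2 / 2 := by
    rw [div_le_iff₀ (by positivity)]
    linarith [(div_le_iff₀' (by positivity)).1 hx.1, sq_nonneg α]
  have hN : (n : ℝ) ^ 2 ≤ (n + (α + 1) / 2) ^ 2 := by
    gcongr
    linarith
  have : 0 ≤ 1 / (16 * (1 - x)) := by positivity
  rw [jacobiFrequency]
  linarith

lemma antitoneOn_jacobiSonin (hα : 1 / 2 ≤ α) (hn : n ≠ 0) :
    AntitoneOn (jacobiSonin α n) (Set.Ico (α ^ 2 / n ^ 2) 1) := by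
  have hIoo {x : ℝ} (hx : x ∈ Set.Ico (α ^ 2 / n ^ 2) 1) : x ∈ Set.Ioo (0 : ℝ) 1 :=
    ⟨lt_of_lt_of_le (by positivity) hx.1, hx.2⟩
  refine antitoneOn_add_div_of_hasDerivAt (convex_Ico _ _)
    (fun x hx ↦ hasDerivAt_jacobiWeight_mul_sq (hIoo hx))
    (fun x hx ↦ hasDerivAt_jacobiWeight_mul_twistedDeriv_sq (by linarith) (hIoo hx))
    (fun x hx ↦ hasDerivAt_jacobiFrequency (hIoo hx)) (fun x hx ↦ ?_)
    (fun x hx ↦ lt_of_lt_of_le (by positivity) (half_sq_le_jacobiFrequency hα hn hx))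
    (fun x _ ↦ ?_)
  · have := jacobiWeight_pos (α := α) (hIoo hx)
    have := (hIoo hx).1
    have := sub_pos.2 hx.2
    positivity
  · have : 0 ≤ α ^ 2 - 1 / 4 := by nlinarith
    positivity

lemma abs_jacobiTwistedDeriv_le (hα : 0 < α) (hn : n ≠ 0) {δ : ℝ} (hδ : 0 < δ)
    (hx : α ^ 2 / n ^ 2 ≤ 1 - δ) :
    |jacobiTwistedDeriv α n (α ^ 2 / n ^ 2)| ≤
      n ^ 2 * ((2 + (2 * α + 1) / (4 * α ^ 2) + 1 / (4 * δ)) * Real.exp (2 * α ^ 2)) := by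
  have hn₁ : (1 : ℝ) ≤ n := mod_cast Nat.one_le_iff_ne_zero.2 hn
  have hscale : 2 * (n : ℝ) ^ 2 * |α ^ 2 / n ^ 2| = 2 * α ^ 2 := by
    rw [abs_of_pos (by positivity)]
    field_simp
  have hp := abs_eval_normalizedJacobi_le hα.le n (α ^ 2 / n ^ 2)
  have hp' := abs_eval_derivative_normalizedJacobi_le hα.le n (α ^ 2 / n ^ 2)
  rw [hscale] at hp hp'
  have hdrift : |jacobiDrift α (α ^ 2 / n ^ 2)| ≤
      n ^ 2 * ((2 * α + 1) / (4 * α ^ 2) + 1 / (4 * δ)) := by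
    have hδ' : δ ≤ 1 - α ^ 2 / n ^ 2 := by linarith
    have h₁ : (2 * α + 1) / (4 * (α ^ 2 / n ^ 2)) = n ^ 2 * ((2 * α + 1) / (4 * α ^ 2)) := by
      field_simp
    have h₂ : 1 / (4 * (1 - α ^ 2 / n ^ 2)) ≤ n ^ 2 * (1 / (4 * δ)) :=
      calc 1 / (4 * (1 - α ^ 2 / n ^ 2)) ≤ 1 / (4 * δ) := by gcongr
        _ ≤ n ^ 2 * (1 / (4 * δ)) := le_mul_of_one_le_left (by positivity) (one_le_pow₀ hn₁)
    have h₃ : 0 < 1 - α ^ 2 / (n : ℝ) ^ 2 := hδ.trans_le hδ'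
    calc |jacobiDrift α (α ^ 2 / n ^ 2)|
        ≤ |(2 * α + 1) / (4 * (α ^ 2 / n ^ 2))| + |1 / (4 * (1 - α ^ 2 / n ^ 2))| := abs_sub _ _
      _ ≤ n ^ 2 * ((2 * α + 1) / (4 * α ^ 2) + 1 / (4 * δ)) := by
          rw [abs_of_pos (by positivity), abs_of_pos (by positivity), h₁, mul_add]
          gcongr
  calc |jacobiTwistedDeriv α n (α ^ 2 / n ^ 2)|
      ≤ 2 * n ^ 2 * Real.exp (2 * α ^ 2) +
        n ^ 2 * ((2 * α + 1) / (4 * α ^ 2) + 1 / (4 * δ)) * Real.exp (2 * α ^ 2) := by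
        refine (abs_add_le _ _).trans ?_
        rw [abs_mul]
        gcongr
    _ = _ := by ring

/-- An upper bound for `jacobiSonin / jacobiWeight` at the starting point `α ^ 2 / n ^ 2`. -/
def jacobiSoninConst (α δ : ℝ) : ℝ :=
  Real.exp (2 * α ^ 2) ^ 2 + 2 * α ^ 2 *
    ((2 + (2 * α + 1) / (4 * α ^ 2) + 1 / (4 * δ)) * Real.exp (2 * α ^ 2)) ^ 2

lemma jacobiSonin_le (hα : 1 / 2 ≤ α) (hn : n ≠ 0) {δ : ℝ} (hδ : 0 < δ)
    (hx : α ^ 2 / n ^ 2 ≤ 1 - δ) :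
    jacobiSonin α n (α ^ 2 / n ^ 2) ≤ jacobiWeight α (α ^ 2 / n ^ 2) * jacobiSoninConst α δ := by
  have hα₀ : 0 < α := by linarith
  have hv := abs_jacobiTwistedDeriv_le hα₀ hn hδ hx
  have hp := abs_eval_normalizedJacobi_le hα₀.le n (α ^ 2 / n ^ 2)
  rw [show 2 * (n : ℝ) ^ 2 * |α ^ 2 / n ^ 2| = 2 * α ^ 2 by
    rw [abs_of_pos (by positivity)]; field_simp] at hp
  have hfreq := half_sq_le_jacobiFrequency (x := α ^ 2 / n ^ 2) hα hn ⟨le_rfl, by linarith⟩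
  have hW := jacobiWeight_pos (α := α) (x := α ^ 2 / n ^ 2) ⟨by positivity, by linarith⟩
  rw [jacobiSoninConst, mul_add, jacobiSonin]
  set K := (2 + (2 * α + 1) / (4 * α ^ 2) + 1 / (4 * δ)) * Real.exp (2 * α ^ 2)
  have : 0 ≤ 1 - α ^ 2 / (n : ℝ) ^ 2 := by linarith
  gcongr ?_ * ?_ + ?_
  · exact sq_le_sq' (neg_le_of_abs_le hp) (le_of_abs_le hp)
  calc jacobiWeight α (α ^ 2 / n ^ 2) * (α ^ 2 / n ^ 2 * (1 - α ^ 2 / n ^ 2)) *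
        jacobiTwistedDeriv α n (α ^ 2 / n ^ 2) ^ 2 / jacobiFrequency α n (α ^ 2 / n ^ 2)
      ≤ jacobiWeight α (α ^ 2 / n ^ 2) * (α ^ 2 / n ^ 2 * 1) * (n ^ 2 * K) ^ 2 / (n ^ 2 / 2) := by
        gcongr _ * (_ * ?_) * ?_ / ?_
        · linarith [(by positivity : 0 ≤ α ^ 2 / (n : ℝ) ^ 2)]
        · exact sq_le_sq' (neg_le_of_abs_le hv) (le_of_abs_le hv)
    _ = jacobiWeight α (α ^ 2 / n ^ 2) * (2 * α ^ 2 * K ^ 2) := by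
        field_simp

lemma jacobiWeight_mul_sq_le (hα : 1 / 2 ≤ α) (hn : n ≠ 0) {δ : ℝ} (hδ : 0 < δ)
    (hx : x ∈ Set.Icc (α ^ 2 / n ^ 2) (1 - δ)) :
    jacobiWeight α x * (normalizedJacobi α n).eval x ^ 2 ≤
      jacobiWeight α (α ^ 2 / n ^ 2) * jacobiSoninConst α δ := by
  obtain ⟨hx₀, hx₁⟩ := hx
  have hx_pos : 0 < x := lt_of_lt_of_le (by positivity) hx₀
  have hsub : 0 < 1 - x := by linarith
  have hweight := jacobiWeight_pos (α := α) (x := x) ⟨hx_pos, by linarith⟩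
  have hfreq : 0 ≤ jacobiFrequency α n x :=
    (half_sq_le_jacobiFrequency hα hn ⟨hx₀, by linarith⟩).trans' (by positivity)
  calc jacobiWeight α x * (normalizedJacobi α n).eval x ^ 2
      ≤ jacobiSonin α n x := le_add_of_nonneg_right (by positivity)
    _ ≤ jacobiSonin α n (α ^ 2 / n ^ 2) :=
        antitoneOn_jacobiSonin hα hn ⟨le_rfl, by linarith⟩ ⟨hx₀, by linarith⟩ hx₀
    _ ≤ jacobiWeight α (α ^ 2 / n ^ 2) * jacobiSoninConst α δ :=
        jacobiSonin_le hα hn hδ (hx₀.trans hx₁)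

lemma normalizedJacobi_sq_mul_le_of_le (hα : 0 ≤ α) (hx : 0 ≤ x) (h : n ^ 2 * x ≤ α ^ 2) :
    (normalizedJacobi α n).eval x ^ 2 * (1 + n ^ 2 * x) ^ (α + 1 / 2) ≤
      Real.exp (2 * α ^ 2) ^ 2 * (1 + α ^ 2) ^ (α + 1 / 2) := by
  have hp : |(normalizedJacobi α n).eval x| ≤ Real.exp (2 * α ^ 2) := by
    refine (abs_eval_normalizedJacobi_le hα n x).trans (exp_le_exp.2 ?_)
    rw [abs_of_nonneg hx]
    linarith
  gcongr ?_ * (_ + ?_) ^ _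
  exact sq_le_sq' (neg_le_of_abs_le hp) (le_of_abs_le hp)

lemma normalizedJacobi_sq_mul_le_of_ge (hα : 1 / 2 ≤ α) (hn : n ≠ 0) {δ : ℝ} (hδ : 0 < δ)
    (hx : x ≤ 1 - δ) (h : α ^ 2 ≤ n ^ 2 * x) :
    (normalizedJacobi α n).eval x ^ 2 * (1 + n ^ 2 * x) ^ (α + 1 / 2) ≤
      jacobiSoninConst α δ / δ ^ (1 / 2 : ℝ) * (1 + α ^ 2) ^ (α + 1 / 2) := by
  set x₀ := α ^ 2 / (n : ℝ) ^ 2 with hx₀_def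
  have hx₀ : 0 < x₀ := by positivity
  have hx₀x : x₀ ≤ x := by rwa [hx₀_def, div_le_iff₀' (by positivity)]
  have hx_pos : 0 < x := hx₀.trans_le hx₀x
  have hK : 0 ≤ jacobiSoninConst α δ := by
    unfold jacobiSoninConst
    positivity
  have hp := jacobiWeight_mul_sq_le hα hn hδ ⟨hx₀x, hx⟩
  have hweight : δ ^ (1 / 2 : ℝ) * x ^ (α + 1 / 2) ≤ jacobiWeight α x := by
    rw [jacobiWeight, mul_comm]
    gcongr
    linarith
  have hweight₀ : jacobiWeight α x₀ ≤ x₀ ^ (α + 1 / 2) :=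
    mul_le_of_le_one_right (by positivity)
      (rpow_le_one (by linarith) (by linarith) (by norm_num))
  have hscale : x₀ * (1 + n ^ 2 * x) ≤ x * (1 + α ^ 2) := by
    have : n ^ 2 * x₀ = α ^ 2 := by rw [hx₀_def]; field_simp
    nlinarith
  rw [div_mul_eq_mul_div, le_div_iff₀ (by positivity)]
  refine le_of_mul_le_mul_left ?_ (by positivity : 0 < x ^ (α + 1 / 2))
  calc x ^ (α + 1 / 2) * ((normalizedJacobi α n).eval x ^ 2 * (1 + n ^ 2 * x) ^ (α + 1 / 2) *
        δ ^ (1 / 2 : ℝ))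
      = δ ^ (1 / 2 : ℝ) * x ^ (α + 1 / 2) * (normalizedJacobi α n).eval x ^ 2 *
        (1 + n ^ 2 * x) ^ (α + 1 / 2) := by ring
    _ ≤ x₀ ^ (α + 1 / 2) * jacobiSoninConst α δ * (1 + n ^ 2 * x) ^ (α + 1 / 2) := by
        gcongr ?_ * _
        exact (mul_le_mul_of_nonneg_right hweight (sq_nonneg _)).trans
          (hp.trans (mul_le_mul_of_nonneg_right hweight₀ hK))
    _ = jacobiSoninConst α δ * (x₀ * (1 + n ^ 2 * x)) ^ (α + 1 / 2) := by
        rw [mul_rpow hx₀.le (by positivity)]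
        ring
    _ ≤ jacobiSoninConst α δ * (x * (1 + α ^ 2)) ^ (α + 1 / 2) := by gcongr
    _ = x ^ (α + 1 / 2) * (jacobiSoninConst α δ * (1 + α ^ 2) ^ (α + 1 / 2)) := by
        rw [mul_rpow hx_pos.le (by positivity)]
        ring

theorem exists_normalizedJacobi_sq_mul_le (hα : 1 / 2 ≤ α) {δ : ℝ} (hδ : 0 < δ) :
    ∃ C, ∀ n : ℕ, ∀ x ∈ Set.Icc 0 (1 - δ),
      (normalizedJacobi α n).eval x ^ 2 * (1 + n ^ 2 * x) ^ (α + 1 / 2) ≤ C := by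
  refine ⟨max (Real.exp (2 * α ^ 2) ^ 2 * (1 + α ^ 2) ^ (α + 1 / 2))
    (jacobiSoninConst α δ / δ ^ (1 / 2 : ℝ) * (1 + α ^ 2) ^ (α + 1 / 2)), fun n x hx ↦ ?_⟩
  rcases le_or_gt (n ^ 2 * x) (α ^ 2) with h | h
  · exact le_max_of_le_left (normalizedJacobi_sq_mul_le_of_le (by linarith) hx.1 h)
  · have hn : n ≠ 0 := by
      rintro rfl
      simp only [CharP.cast_eq_zero] at h
      nlinarith [sq_nonneg α]
    exact le_max_of_le_right (normalizedJacobi_sq_mul_le_of_ge hα hn hδ hx.2 h.le)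

end Sonin

section MehlerHeine

open Polynomial Finset

variable {α : ℝ}

/-- The Bessel–Clifford function `₀F₁(; α + 1; -z) = Γ(α + 1) z^{-α/2} J_α(2√z)`. -/
def besselClifford (α z : ℝ) : ℝ :=
  ∑' k : ℕ, (-z) ^ k / (k.factorial * (ascPochhammer ℝ k).eval (α + 1))

lemma tendsto_jacobiCoeff_mul_pow (hα : -1 < α) {x : ℕ → ℝ} {z : ℝ}
    (h : Tendsto (fun n : ℕ ↦ n ^ 2 * x n) atTop (𝓝 z)) (k : ℕ) :
    Tendsto (fun n ↦ jacobiCoeff α n k * x n ^ k) atTop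
      (𝓝 ((-z) ^ k / (k.factorial * (ascPochhammer ℝ k).eval (α + 1)))) := by
  induction k with
  | zero => simp
  | succ k ih =>
    have hpoch := ascPochhammer_pos k (α + 1) (by linarith)
    have hk : 0 < α + 1 + k := by linarith [Nat.cast_nonneg (α := ℝ) k]
    have hdiv (c : ℝ) : Tendsto (fun n : ℕ ↦ c / (n : ℝ)) atTop (𝓝 0) :=
      tendsto_const_div_atTop_nhds_zero_nat c
    have ratio : Tendsto (fun n : ℕ ↦ (k / n - 1) * (1 + (α + 1 + k) / n) /
        ((k + 1) * (α + 1 + k)) * (n ^ 2 * x n)) atTop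
        (𝓝 ((0 - 1) * (1 + 0) / ((k + 1) * (α + 1 + k)) * z)) :=
      ((((hdiv _).sub_const _).mul ((hdiv _).const_add _)).div_const _).mul h
    convert! (ih.mul ratio).congr' ?_ using 2
    · rw [ascPochhammer_succ_eval, Nat.factorial_succ]
      push_cast
      field_simp
      ring
    · filter_upwards [eventually_ne_atTop 0] with n hn
      rw [jacobiCoeff_succ hα]
      field_simp
      ring

lemma eval_normalizedJacobi_eq_tsum (α : ℝ) (n : ℕ) (x : ℝ) :
    (normalizedJacobi α n).eval x = ∑' k, jacobiCoeff α n k * x ^ k := by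
  rw [tsum_eq_sum (s := range (n + 1)) fun k hk ↦ by
    rw [jacobiCoeff_eq_zero_of_lt α (by simpa using hk), zero_mul], normalizedJacobi]
  simp [eval_finsetSum]

theorem tendsto_eval_normalizedJacobi (hα : 0 ≤ α) {x : ℕ → ℝ} {z : ℝ}
    (h : Tendsto (fun n : ℕ ↦ n ^ 2 * x n) atTop (𝓝 z)) :
    Tendsto (fun n ↦ (normalizedJacobi α n).eval (x n)) atTop (𝓝 (besselClifford α z)) := by
  simp only [eval_normalizedJacobi_eq_tsum, besselClifford]
  refine tendsto_tsum_of_dominated_convergence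
    (Real.summable_pow_div_factorial (2 * (|z| + 1)))
    (fun k ↦ tendsto_jacobiCoeff_mul_pow (by linarith) h k) ?_
  filter_upwards [h.abs.eventually_le_const (lt_add_one |z|)] with n hn k
  rw [abs_mul, abs_of_nonneg (by positivity : (0 : ℝ) ≤ n ^ 2)] at hn
  calc ‖jacobiCoeff α n k * x n ^ k‖
      ≤ (2 * (n : ℝ) ^ 2) ^ k / k.factorial * |x n| ^ k := by
        rw [Real.norm_eq_abs, abs_mul, abs_pow]
        gcongr
        exact abs_jacobiCoeff_le hα n k
    _ = (2 * (n ^ 2 * |x n|)) ^ k / k.factorial := by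
        rw [div_mul_eq_mul_div, ← mul_pow, mul_assoc]
    _ ≤ (2 * (|z| + 1)) ^ k / k.factorial := by gcongr

end MehlerHeine

section Plancherel

open FourierTransform SchwartzMap
open scoped ContDiff InnerProductSpace

variable {E : Type*} [NormedAddCommGroup E] [InnerProductSpace ℝ E] [FiniteDimensional ℝ E]
  [MeasurableSpace E] [BorelSpace E]

lemma integral_fourier_mul_eq {f g : E → ℂ} (hf : Integrable f) (hg : Integrable g) :
    ∫ x, 𝓕 f x * g x = ∫ x, f x * 𝓕 g x := by
  simpa using! VectorFourier.integral_fourierIntegral_smul_eq_flip (L := innerₗ E)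
    (μ := volume) (ν := volume) continuous_fourierChar continuous_inner hf hg

/- Both sides define the same tempered distribution: this is the definition of the `L²` transform
on one side and Fubini on the other. -/
lemma fourier_toLp_ae_eq {f : E → ℂ} (hf : Integrable f) (hf2 : MemLp f 2) :
    (𝓕 (hf2.toLp f) : Lp (α := E) ℂ 2 volume) =ᵐ[volume] 𝓕 f := by
  have hcont : Continuous (𝓕 f) := VectorFourier.fourierIntegral_continuous
    continuous_fourierChar (L := innerₗ E) continuous_inner hf
  refine ae_eq_of_integral_contDiff_smul_eq ((Lp.memLp _).locallyIntegrable (by norm_num))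
    hcont.locallyIntegrable fun g hg hgc ↦ ?_
  let φ : 𝓢(E, ℂ) := HasCompactSupport.toSchwartzMap (f := fun x ↦ (g x : ℂ))
    (hgc.comp_left (g := Complex.ofReal) Complex.ofReal_zero) (Complex.ofRealCLM.contDiff.comp hg)
  have hdist := congrArg (fun T ↦ T φ) (Lp.fourier_toTemperedDistribution_eq (hf2.toLp f))
  simp only [TemperedDistribution.fourier_apply, Lp.toTemperedDistribution_apply,
    SchwartzMap.fourier_coe, smul_eq_mul] at hdist
  calc ∫ x, g x • (𝓕 (hf2.toLp f) : Lp (α := E) ℂ 2 volume) x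
      = ∫ x, φ x * (𝓕 (hf2.toLp f) : Lp (α := E) ℂ 2 volume) x := rfl
    _ = ∫ x, 𝓕 (φ : E → ℂ) x * hf2.toLp f x := hdist.symm
    _ = ∫ x, 𝓕 (φ : E → ℂ) x * f x := integral_congr_ae <| by
        filter_upwards [hf2.coeFn_toLp] with x hx
        rw [hx]
    _ = ∫ x, g x • 𝓕 f x := integral_fourier_mul_eq φ.integrable hf

theorem integral_norm_fourier_sq {f : E → ℂ} (hf : Integrable f) (hf2 : MemLp f 2) :
    ∫ x, ‖𝓕 f x‖ ^ 2 = ∫ x, ‖f x‖ ^ 2 := by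
  have norm_sq (F : Lp (α := E) ℂ 2 volume) : ‖F‖ ^ 2 = ∫ x, ‖F x‖ ^ 2 := by
    rw [← real_inner_self_eq_norm_sq, MeasureTheory.L2.inner_def]
    simp
  calc ∫ x, ‖𝓕 f x‖ ^ 2
      = ∫ x, ‖(𝓕 (hf2.toLp f) : Lp (α := E) ℂ 2 volume) x‖ ^ 2 := integral_congr_ae <| by
        filter_upwards [fourier_toLp_ae_eq hf hf2] with x hx
        rw [hx]
    _ = ∫ x, ‖hf2.toLp f x‖ ^ 2 := by rw [← norm_sq, ← norm_sq, Lp.norm_fourier_eq]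
    _ = ∫ x, ‖f x‖ ^ 2 := integral_congr_ae <| by
        filter_upwards [hf2.coeFn_toLp] with x hx
        rw [hx]

end Plancherel

section HomogeneousMoments

open Metric Module Measure

lemma cast_finrank_add_sub_one (E : Type*) [NormedAddCommGroup E] [NormedSpace ℝ E]
    [FiniteDimensional ℝ E] [Nontrivial E] (m : ℕ) :
    ((finrank ℝ E + m - 1 : ℕ) : ℝ) + 1 = finrank ℝ E + m := by
  have : 0 < finrank ℝ E := finrank_pos
  norm_cast
  lia

variable {E : Type*} [NormedAddCommGroup E] [NormedSpace ℝ E] [FiniteDimensional ℝ E]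
  [Nontrivial E] [MeasurableSpace E] [BorelSpace E] (μ : Measure E) [μ.IsAddHaarMeasure]
  {f : E → ℝ} {m : ℕ}

lemma integral_mul_comp_norm_of_homogeneous
    (hf : ∀ r : ℝ, 0 < r → ∀ x, f (r • x) = r ^ m * f x) (g : ℝ → ℝ) :
    ∫ x, f x * g ‖x‖ ∂μ = (∫ u : sphere (0 : E) 1, f u ∂μ.toSphere) *
      ∫ r in Set.Ioi (0 : ℝ), r ^ (finrank ℝ E + m - 1) * g r := by
  have hpolar (p : sphere (0 : E) 1 × Set.Ioi (0 : ℝ)) :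
      f (p.2.1 • p.1.1) * g ‖p.2.1 • p.1.1‖ = f p.1 * (p.2.1 ^ m * g p.2) := by
    rw [hf _ p.2.2, norm_smul, norm_eq_of_mem_sphere p.1, mul_one, Real.norm_of_nonneg p.2.2.le]
    ring
  calc ∫ x, f x * g ‖x‖ ∂μ
      = ∫ x : ({(0)}ᶜ : Set E), f x * g ‖x.1‖ ∂μ.comap (↑) := by
        rw [integral_subtype_comap (measurableSet_singleton _).compl fun x ↦ f x * g ‖x‖,
          restrict_compl_singleton]
    _ = ∫ p : sphere (0 : E) 1 × Set.Ioi (0 : ℝ), f p.1 * (p.2.1 ^ m * g p.2)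
          ∂μ.toSphere.prod (.volumeIoiPow (finrank ℝ E - 1)) := by
        rw [← μ.measurePreserving_homeomorphUnitSphereProd.integral_comp
          (Homeomorph.measurableEmbedding _)]
        refine integral_congr_ae (Eventually.of_forall fun x ↦ ?_)
        dsimp only
        rw [← hpolar, ← homeomorphUnitSphereProd_symm_apply_coe, Homeomorph.symm_apply_apply]
    _ = _ := by
        rw [integral_prod_mul (fun u : sphere (0 : E) 1 ↦ f u)
          (fun r : Set.Ioi (0 : ℝ) ↦ r.1 ^ m * g r)]
        simp only [Measure.volumeIoiPow, ENNReal.ofReal]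
        rw [integral_withDensity_eq_integral_smul
          (measurable_subtype_coe.pow_const _).real_toNNReal,
          integral_subtype_comap measurableSet_Ioi
            fun r ↦ Real.toNNReal (r ^ (finrank ℝ E - 1)) • (r ^ m * g r),
          setIntegral_congr_fun measurableSet_Ioi fun r hr ↦ ?_]
        rw [NNReal.smul_def, Real.coe_toNNReal _ (pow_nonneg hr.out.le _), smul_eq_mul, ← mul_assoc,
          ← pow_add, tsub_add_eq_add_tsub Module.finrank_pos]

lemma setIntegral_unitBall_of_homogeneous
    (hf : ∀ r : ℝ, 0 < r → ∀ x, f (r • x) = r ^ m * f x) :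
    ∫ x in ball 0 1, f x ∂μ =
      (∫ u : sphere (0 : E) 1, f u ∂μ.toSphere) / (finrank ℝ E + m) := by
  have hind (r : ℝ) : r ^ (finrank ℝ E + m - 1) * (Set.Iio 1).indicator 1 r =
      (Set.Iio 1).indicator (· ^ (finrank ℝ E + m - 1)) r := by
    simp [Set.indicator_apply]
  calc ∫ x in ball 0 1, f x ∂μ = ∫ x, f x * (Set.Iio 1).indicator 1 ‖x‖ ∂μ := by
        rw [← integral_indicator measurableSet_ball]
        congr! with x
        by_cases hx : ‖x‖ < 1 <;> simp [hx]
    _ = (∫ u : sphere (0 : E) 1, f u ∂μ.toSphere) *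
          ∫ r in (0 : ℝ)..1, r ^ (finrank ℝ E + m - 1) := by
        simp only [integral_mul_comp_norm_of_homogeneous μ hf, hind]
        rw [setIntegral_indicator measurableSet_Iio, Set.Ioi_inter_Iio,
          intervalIntegral.integral_of_le zero_le_one, integral_Ioc_eq_integral_Ioo]
    _ = _ := by
        rw [integral_pow, cast_finrank_add_sub_one]
        simp [div_eq_mul_inv]

lemma integral_mul_exp_neg_norm_sq_of_homogeneous
    (hf : ∀ r : ℝ, 0 < r → ∀ x, f (r • x) = r ^ m * f x) :
    ∫ x, f x * exp (-‖x‖ ^ 2) ∂μ =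
      Gamma ((finrank ℝ E + m) / 2 + 1) * ∫ x in ball 0 1, f x ∂μ := by
  have hradial : ∫ r in Set.Ioi (0 : ℝ), r ^ (finrank ℝ E + m - 1) * exp (-r ^ 2) =
      Gamma ((finrank ℝ E + m) / 2) / 2 := by
    have h := integral_rpow_mul_exp_neg_rpow (p := 2) (q := (finrank ℝ E + m - 1 : ℕ))
      two_pos (by linarith [Nat.cast_nonneg (α := ℝ) (finrank ℝ E + m - 1)])
    simp_rw [Real.rpow_natCast, Real.rpow_ofNat] at h
    rw [h, cast_finrank_add_sub_one]
    ring
  have : 0 < finrank ℝ E := finrank_pos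
  rw [integral_mul_comp_norm_of_homogeneous μ hf fun r ↦ exp (-r ^ 2), hradial,
    setIntegral_unitBall_of_homogeneous μ hf, Real.Gamma_add_one (by positivity)]
  field_simp

end HomogeneousMoments

section BallFourier

open Metric Module
open scoped InnerProductSpace FourierTransform

lemma gamma_natCast_add_half (k : ℕ) :
    Gamma (k + 1 / 2) = (2 * k).factorial / (4 ^ k * k.factorial) * √π := by
  have h := Real.Gamma_mul_Gamma_add_half (k + 1 / 2)
  have hpow : (2 : ℝ) ^ (1 - 2 * ((k : ℝ) + 1 / 2)) = (4 ^ k)⁻¹ := by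
    rw [show 1 - 2 * ((k : ℝ) + 1 / 2) = -((2 * k : ℕ) : ℝ) by push_cast; ring,
      Real.rpow_neg two_pos.le, Real.rpow_natCast, pow_mul]
    norm_num
  rw [add_assoc, add_halves, Real.Gamma_nat_eq_factorial, hpow, mul_add,
    mul_one_div_cancel two_ne_zero] at h
  have hfact : Gamma (2 * (k : ℝ) + 1) = (2 * k).factorial :=
    mod_cast Real.Gamma_nat_eq_factorial (2 * k)
  rw [hfact] at h
  field_simp at h ⊢
  linarith

lemma gamma_add_natCast {a : ℝ} (ha : 0 < a) (k : ℕ) :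
    Gamma (a + k) = Gamma a * (ascPochhammer ℝ k).eval a := by
  induction k with
  | zero => simp
  | succ k ih =>
    rw [Nat.cast_succ, ← add_assoc, Real.Gamma_add_one (by positivity), ih,
      ascPochhammer_succ_eval]
    ring

lemma integral_pow_two_mul_mul_exp_neg_sq (k : ℕ) :
    ∫ t : ℝ, t ^ (2 * k) * exp (-t ^ 2) = (2 * k).factorial / (4 ^ k * k.factorial) * √π := by
  have habs := integral_comp_abs (f := fun t ↦ t ^ (2 * k) * exp (-t ^ 2))
  have hgamma := integral_rpow_mul_exp_neg_rpow (p := 2) (q := (2 * k : ℕ)) two_pos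
    (by linarith [Nat.cast_nonneg (α := ℝ) (2 * k)])
  simp only [sq_abs, (even_two_mul k).pow_abs] at habs
  simp only [Real.rpow_natCast, Real.rpow_ofNat] at hgamma
  rw [habs, hgamma, ← gamma_natCast_add_half]
  push_cast
  ring_nf

variable {ι : Type*} [Fintype ι]

lemma integral_coord_pow_mul_exp_neg_norm_sq (i : ι) (k : ℕ) :
    ∫ x : EuclideanSpace ℝ ι, x i ^ (2 * k) * exp (-‖x‖ ^ 2) =
      (2 * k).factorial / (4 ^ k * k.factorial) * √π ^ Fintype.card ι := by
  classical
  let g (j : ι) (t : ℝ) : ℝ := (if j = i then t ^ (2 * k) else 1) * exp (-t ^ 2)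
  have hprod (x : ι → ℝ) : WithLp.toLp 2 x i ^ (2 * k) * exp (-‖WithLp.toLp 2 x‖ ^ 2) =
      ∏ j, g j (x j) := by
    simp only [g, Finset.prod_mul_distrib, ← Real.exp_sum]
    simp [EuclideanSpace.norm_sq_eq]
  have hg (j : ι) (hj : j ∈ Finset.univ.erase i) : ∫ t, g j t = √π := by
    simpa [g, Finset.ne_of_mem_erase hj] using integral_gaussian 1
  rw [← (PiLp.volume_preserving_toLp ι).integral_comp
    (MeasurableEquiv.toLp 2 (ι → ℝ)).measurableEmbedding]
  simp_rw [hprod]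
  rw [integral_fintype_prod_volume_eq_prod, ← Finset.mul_prod_erase _ _ (Finset.mem_univ i),
    Finset.prod_congr rfl hg]
  simp only [g, if_true, integral_pow_two_mul_mul_exp_neg_sq]
  rw [Finset.prod_const, Finset.card_erase_of_mem (Finset.mem_univ i), Finset.card_univ, mul_assoc,
    mul_pow_sub_one (Fintype.card_pos_iff.2 ⟨i⟩).ne']

lemma setIntegral_unitBall_sin_inner (y : EuclideanSpace ℝ ι) :
    ∫ x in ball (0 : EuclideanSpace ℝ ι) 1, sin ⟪y, x⟫_ℝ = 0 := by
  have h := (Measure.measurePreserving_neg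
    (volume : Measure (EuclideanSpace ℝ ι))).setIntegral_preimage_emb
    (MeasurableEquiv.neg _).measurableEmbedding (fun x ↦ sin ⟪y, x⟫_ℝ) (ball 0 1)
  simp only [inner_neg_right, sin_neg, integral_neg, Set.neg_preimage, neg_ball, neg_zero] at h
  linarith

variable [Nonempty ι]

lemma integral_inner_pow_mul_exp_neg_norm_sq (y : EuclideanSpace ℝ ι) (k : ℕ) :
    ∫ x : EuclideanSpace ℝ ι, ⟪y, x⟫_ℝ ^ (2 * k) * exp (-‖x‖ ^ 2) =
      ‖y‖ ^ (2 * k) * ((2 * k).factorial / (4 ^ k * k.factorial) * √π ^ Fintype.card ι) := by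
  classical
  obtain ⟨i⟩ := ‹Nonempty ι›
  let e : EuclideanSpace ℝ ι := ‖y‖ • EuclideanSpace.single i 1
  let R := (ℝ ∙ (y - e))ᗮ.reflection
  have hRy : R y = e := Submodule.reflection_sub (by simp [e, norm_smul])
  have hinner (x : EuclideanSpace ℝ ι) : ⟪y, R x⟫_ℝ = ‖y‖ * x i := by
    rw [← R.inner_map_map, hRy, Submodule.reflection_reflection, inner_smul_left,
      EuclideanSpace.inner_single_left]
    simp
  rw [← R.measurePreserving.integral_comp R.toHomeomorph.measurableEmbedding,
    ← integral_coord_pow_mul_exp_neg_norm_sq i, ← integral_const_mul]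
  simp only [hinner, R.norm_map, mul_pow, mul_assoc]

lemma volume_real_unitBall :
    volume.real (ball (0 : EuclideanSpace ℝ ι) 1) =
      √π ^ Fintype.card ι / Gamma (Fintype.card ι / 2 + 1) := by
  have : 0 < Gamma ((Fintype.card ι : ℝ) / 2 + 1) := Gamma_pos_of_pos (by positivity)
  rw [measureReal_def, EuclideanSpace.volume_ball, ENNReal.ofReal_one, one_pow, one_mul,
    ENNReal.toReal_ofReal (by positivity)]

lemma setIntegral_unitBall_inner_pow (y : EuclideanSpace ℝ ι) (k : ℕ) :
    ∫ x in ball (0 : EuclideanSpace ℝ ι) 1, ⟪y, x⟫_ℝ ^ (2 * k) =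
      volume.real (ball (0 : EuclideanSpace ℝ ι) 1) * (2 * k).factorial *
        ((‖y‖ ^ 2 / 4) ^ k /
          (k.factorial * (ascPochhammer ℝ k).eval ((Fintype.card ι : ℝ) / 2 + 1))) := by
  have h := integral_mul_exp_neg_norm_sq_of_homogeneous volume (m := 2 * k)
    (f := fun x : EuclideanSpace ℝ ι ↦ ⟪y, x⟫_ℝ ^ (2 * k))
    fun r _ x ↦ by rw [inner_smul_right, mul_pow]
  have hpos : (0 : ℝ) < Fintype.card ι / 2 + 1 := by positivity
  rw [integral_inner_pow_mul_exp_neg_norm_sq, finrank_euclideanSpace,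
    show ((Fintype.card ι : ℝ) + (2 * k : ℕ)) / 2 + 1 = Fintype.card ι / 2 + 1 + k by
      push_cast; ring, gamma_add_natCast hpos] at h
  have := Gamma_pos_of_pos hpos
  have := ascPochhammer_pos k _ hpos
  rw [volume_real_unitBall, div_pow, ← pow_mul]
  generalize (Fintype.card ι : ℝ) / 2 + 1 = a at *
  field_simp at h ⊢
  linarith

lemma setIntegral_unitBall_cos_inner (y : EuclideanSpace ℝ ι) :
    ∫ x in ball (0 : EuclideanSpace ℝ ι) 1, cos ⟪y, x⟫_ℝ =
      volume.real (ball (0 : EuclideanSpace ℝ ι) 1) *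
        besselClifford (Fintype.card ι / 2) (‖y‖ ^ 2 / 4) := by
  have hbound (k : ℕ) : ∀ᵐ x ∂volume.restrict (ball (0 : EuclideanSpace ℝ ι) 1),
      ‖(-1) ^ k * ⟪y, x⟫_ℝ ^ (2 * k) / (2 * k).factorial‖ ≤
        ‖y‖ ^ (2 * k) / (2 * k).factorial := by
    filter_upwards [self_mem_ae_restrict measurableSet_ball] with x hx
    have hxy : |⟪y, x⟫_ℝ| ≤ ‖y‖ := (abs_real_inner_le_norm y x).trans
      (mul_le_of_le_one_right (norm_nonneg y) (mem_ball_zero_iff.1 hx).le)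
    simp only [norm_div, norm_mul, norm_pow, norm_neg, norm_one, one_pow, one_mul,
      Real.norm_eq_abs, Nat.abs_cast]
    gcongr
  have h := hasSum_integral_of_dominated_convergence _ (fun k ↦ by fun_prop) hbound
    (Eventually.of_forall fun _ ↦ (Real.hasSum_cosh ‖y‖).summable)
    (integrableOn_const measure_ball_lt_top.ne)
    (Eventually.of_forall fun x ↦ Real.hasSum_cos ⟪y, x⟫_ℝ)
  rw [← h.tsum_eq, besselClifford, ← tsum_mul_left]
  congr! 2 with k
  rw [integral_div, integral_const_mul, setIntegral_unitBall_inner_pow, neg_pow (‖y‖ ^ 2 / 4)]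
  field_simp

lemma fourier_indicator_unitBall (w : EuclideanSpace ℝ ι) :
    𝓕 ((ball (0 : EuclideanSpace ℝ ι) 1).indicator fun _ ↦ (1 : ℂ)) w =
      volume.real (ball (0 : EuclideanSpace ℝ ι) 1) *
        besselClifford (Fintype.card ι / 2) (‖(2 * π) • w‖ ^ 2 / 4) := by
  have hint {f : EuclideanSpace ℝ ι → ℂ} (hf : Continuous f) : IntegrableOn f (ball 0 1) :=
    (hf.continuousOn.integrableOn_compact (isCompact_closedBall 0 1)).mono_set
      ball_subset_closedBall
  have hexp (v : EuclideanSpace ℝ ι) : Complex.exp ((-2 * π * ⟪v, w⟫_ℝ : ℝ) * Complex.I) =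
      (cos ⟪(2 * π) • w, v⟫_ℝ : ℝ) - (sin ⟪(2 * π) • w, v⟫_ℝ : ℝ) * Complex.I := by
    rw [inner_smul_left, real_inner_comm, Complex.exp_mul_I]
    simp [sub_eq_add_neg]
  rw [Real.fourier_eq']
  simp_rw [← Set.indicator_smul]
  rw [integral_indicator measurableSet_ball]
  simp_rw [hexp, smul_eq_mul, mul_one]
  rw [integral_sub (hint (by fun_prop)) (hint (by fun_prop)), integral_mul_const,
    integral_complex_ofReal, integral_complex_ofReal, setIntegral_unitBall_cos_inner,
    setIntegral_unitBall_sin_inner]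
  simp

theorem integral_besselClifford_norm_sq :
    ∫ y : EuclideanSpace ℝ ι, besselClifford (Fintype.card ι / 2) (‖y‖ ^ 2 / 4) ^ 2 =
      (2 * π) ^ Fintype.card ι / volume.real (ball (0 : EuclideanSpace ℝ ι) 1) := by
  set V := volume.real (ball (0 : EuclideanSpace ℝ ι) 1) with hV
  have hV_pos : 0 < V := ENNReal.toReal_pos (measure_ball_pos _ _ one_pos).ne'
    measure_ball_lt_top.ne
  have hplancherel := integral_norm_fourier_sq
    ((integrable_indicator_iff measurableSet_ball).2 (integrableOn_const measure_ball_lt_top.ne))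
    (memLp_indicator_const (μ := (volume : Measure (EuclideanSpace ℝ ι))) (s := ball 0 1) 2
      measurableSet_ball (1 : ℂ) (Or.inr measure_ball_lt_top.ne))
  have hmass : ∫ x : EuclideanSpace ℝ ι, ‖(ball (0 : EuclideanSpace ℝ ι) 1).indicator
      (fun _ ↦ (1 : ℂ)) x‖ ^ 2 = V := by
    rw [hV, ← integral_indicator_one measurableSet_ball]
    congr! with x
    by_cases hx : ‖x‖ < 1 <;> simp [hx]
  simp only [fourier_indicator_unitBall, hmass, norm_mul, Complex.norm_real, mul_pow, ← hV,
    Real.norm_eq_abs, sq_abs, integral_const_mul] at hplancherel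
  rw [Measure.integral_comp_smul_of_nonneg volume
    (fun y : EuclideanSpace ℝ ι ↦ besselClifford (Fintype.card ι / 2) (‖y‖ ^ 2 / 4) ^ 2) (2 * π)
    (hR := by positivity), finrank_euclideanSpace, smul_eq_mul] at hplancherel
  field_simp at hplancherel ⊢
  linarith

end BallFourier

section QuadraticForm

variable {ι : Type*} [Fintype ι]

theorem smul_dotProduct_mulVec_smul (Q : Matrix ι ι ℝ) (t : ℝ) (y : ι → ℝ) :
    (t • y) ⬝ᵥ (Q *ᵥ (t • y)) = t ^ 2 * (y ⬝ᵥ (Q *ᵥ y)) := by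
  rw [mulVec_smul, dotProduct_smul, smul_dotProduct, smul_eq_mul, smul_eq_mul, sq, mul_assoc]

open scoped MatrixOrder ComplexOrder in
theorem exists_eq_transpose_mul_self_of_posSemidef {Q : Matrix ι ι ℝ} (hQ : Q.PosSemidef) :
    ∃ L : Matrix ι ι ℝ, Q = Lᵀ * L := by
  classical
  obtain ⟨L, hL⟩ := CStarAlgebra.nonneg_iff_eq_star_mul_self.1 hQ.nonneg
  exact ⟨L, by rw [hL, star_eq_conjTranspose, conjTranspose_eq_transpose_of_trivial]⟩

theorem integral_comp_mulVec [DecidableEq ι] {F : Type*} [NormedAddCommGroup F] [NormedSpace ℝ F]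
    {L : Matrix ι ι ℝ} (hL : L.det ≠ 0) (f : (ι → ℝ) → F) :
    ∫ y : ι → ℝ, f (L *ᵥ y) = |L.det|⁻¹ • ∫ z : ι → ℝ, f z := by
  have hemb : MeasurableEmbedding (Matrix.toLin' L) :=
    (LinearMap.continuous_of_finiteDimensional _).measurableEmbedding
      (mulVec_injective_of_isUnit ((isUnit_iff_isUnit_det L).2 hL.isUnit))
  simp_rw [← Matrix.toLin'_apply L]
  rw [← hemb.integral_map f, Real.map_matrix_volume_pi_eq_smul_volume_pi hL, integral_smul_measure,
    ENNReal.toReal_ofReal (abs_nonneg _), abs_inv]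

theorem integral_comp_quadraticForm [DecidableEq ι] {F : Type*} [NormedAddCommGroup F]
    [NormedSpace ℝ F] {Q : Matrix ι ι ℝ} (hQ : Q.PosDef) (f : ℝ → F) :
    ∫ y : ι → ℝ, f (y ⬝ᵥ (Q *ᵥ y)) =
      (√Q.det)⁻¹ • ∫ z : EuclideanSpace ℝ ι, f (‖z‖ ^ 2) := by
  obtain ⟨L, rfl⟩ := exists_eq_transpose_mul_self_of_posSemidef hQ.posSemidef
  have hdet : (Lᵀ * L).det = L.det ^ 2 := by rw [det_mul, det_transpose, sq]
  have hL : L.det ≠ 0 := fun h ↦ by simpa [hdet, h] using hQ.det_pos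
  have hform (y : ι → ℝ) : y ⬝ᵥ ((Lᵀ * L) *ᵥ y) = (L *ᵥ y) ⬝ᵥ (L *ᵥ y) := by
    rw [← mulVec_mulVec, dotProduct_mulVec, vecMul_transpose]
  have hnorm (z : ι → ℝ) : ‖WithLp.toLp 2 z‖ ^ 2 = z ⬝ᵥ z := by
    rw [EuclideanSpace.real_norm_sq_eq]
    simp only [dotProduct, sq]
  simp_rw [hform]
  rw [integral_comp_mulVec hL (fun z ↦ f (z ⬝ᵥ z)), hdet, Real.sqrt_sq_eq_abs,
    ← (PiLp.volume_preserving_toLp ι).integral_comp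
      (MeasurableEquiv.toLp 2 (ι → ℝ)).measurableEmbedding]
  simp_rw [hnorm]

end QuadraticForm

section NearZero

variable {E : Type*} [NormedAddCommGroup E]

theorem exists_mul_norm_sq_le_of_isLittleO {f q : E → ℝ} {K : Set E} (hK : IsCompact K)
    (hf : ContinuousOn f K) (hpos : ∀ ξ ∈ K, ξ ≠ 0 → 0 < f ξ) {c : ℝ} (hc : 0 < c)
    (hq : ∀ ξ, c * ‖ξ‖ ^ 2 ≤ q ξ) (hfq : (f - q) =o[𝓝 0] fun ξ ↦ ‖ξ‖ ^ 2) :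
    ∃ c' > 0, ∀ ξ ∈ K, c' * ‖ξ‖ ^ 2 ≤ f ξ := by
  have hnear : ∀ᶠ ξ in 𝓝 0, c / 2 * ‖ξ‖ ^ 2 ≤ f ξ := by
    filter_upwards [hfq.def (half_pos hc)] with ξ hξ
    rw [Real.norm_of_nonneg (sq_nonneg ‖ξ‖), Pi.sub_apply] at hξ
    linarith [hq ξ, neg_abs_le (f ξ - q ξ), Real.norm_eq_abs (f ξ - q ξ)]
  obtain ⟨U, hU, hUo, hU0⟩ := eventually_nhds_iff.1 hnear
  obtain ⟨m, hm, hfar⟩ := (hK.diff hUo).exists_forall_le' (hf.mono Set.sdiff_subset)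
    (fun ξ hξ ↦ hpos ξ hξ.1 (by rintro rfl; exact hξ.2 hU0))
  obtain ⟨R, hR, hKR⟩ := hK.isBounded.exists_pos_norm_le
  refine ⟨min (c / 2) (m / R ^ 2), by positivity, fun ξ hξ ↦ ?_⟩
  by_cases hξU : ξ ∈ U
  · exact (by gcongr; exact min_le_left _ _ : _ ≤ c / 2 * ‖ξ‖ ^ 2).trans (hU ξ hξU)
  · calc min (c / 2) (m / R ^ 2) * ‖ξ‖ ^ 2 ≤ m / R ^ 2 * R ^ 2 := by
          gcongr
          · exact min_le_right _ _
          · exact hKR ξ hξ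
      _ = m := by field_simp
      _ ≤ f ξ := hfar ξ ⟨hξ, hξU⟩

variable [NormedSpace ℝ E]

theorem exists_mul_norm_sq_le_of_homogeneous [FiniteDimensional ℝ E] {q : E → ℝ}
    (hcont : Continuous q) (hhom : ∀ (t : ℝ) y, q (t • y) = t ^ 2 * q y)
    (hpos : ∀ y ≠ 0, 0 < q y) : ∃ c > 0, ∀ y, c * ‖y‖ ^ 2 ≤ q y := by
  have := FiniteDimensional.proper_real E
  obtain ⟨c, hc, hle⟩ := (isCompact_sphere (0 : E) 1).exists_forall_le' hcont.continuousOn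
    (fun y hy ↦ hpos y (ne_zero_of_mem_unit_sphere ⟨y, hy⟩))
  refine ⟨c, hc, fun y ↦ ?_⟩
  obtain rfl | hy := eq_or_ne y 0
  · simpa using (hhom 0 0).ge
  · have hunit : ‖y‖⁻¹ • y ∈ Metric.sphere (0 : E) 1 := by simp [norm_smul, hy]
    have : 0 < ‖y‖ := norm_pos_iff.2 hy
    calc c * ‖y‖ ^ 2 ≤ q (‖y‖⁻¹ • y) * ‖y‖ ^ 2 := by gcongr; exact hle _ hunit
      _ = q y := by rw [hhom]; field_simp

theorem tendsto_inv_natCast_smul (y : E) :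
    Tendsto (fun n : ℕ ↦ (n : ℝ)⁻¹ • y) atTop (𝓝 0) := by
  simpa using (tendsto_inv_atTop_nhds_zero_nat (𝕜 := ℝ)).smul_const y

theorem tendsto_sq_mul_comp_inv_smul {f q : E → ℝ}
    (hhom : ∀ (t : ℝ) y, q (t • y) = t ^ 2 * q y)
    (hf : (f - q) =o[𝓝 0] fun ξ ↦ ‖ξ‖ ^ 2) (y : E) :
    Tendsto (fun n : ℕ ↦ (n : ℝ) ^ 2 * f ((n : ℝ)⁻¹ • y)) atTop (𝓝 (q y)) := by
  have hdiff : (fun n : ℕ ↦ (n : ℝ) ^ 2 * (f - q) ((n : ℝ)⁻¹ • y)) =o[atTop] fun _ ↦ ‖y‖ ^ 2 := by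
    refine ((Asymptotics.isBigO_refl (fun n : ℕ ↦ (n : ℝ) ^ 2) atTop).mul_isLittleO
      (hf.comp_tendsto (tendsto_inv_natCast_smul y))).trans_eventuallyEq ?_
    filter_upwards [eventually_ne_atTop 0] with n hn
    simp only [Function.comp_apply, norm_smul, norm_inv, Real.norm_natCast]
    field_simp
  have hlim := (hdiff.tendsto_zero_of_tendsto tendsto_const_nhds).add_const (q y)
  rw [zero_add] at hlim
  refine hlim.congr' ?_
  filter_upwards [eventually_ne_atTop 0] with n hn
  simp only [Pi.sub_apply, hhom]
  field_simp
  ring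

end NearZero

section ScalingLimit

variable {E : Type*} [NormedAddCommGroup E] [NormedSpace ℝ E]

theorem mul_one_add_norm_sq_le {K : Set E} {h : E → ℝ} {c : ℝ}
    (hlow : ∀ ξ ∈ K, c * ‖ξ‖ ^ 2 ≤ h ξ) {r : ℝ} (hr : r ≠ 0) {y : E} (hy : r⁻¹ • y ∈ K) :
    min 1 c * (1 + ‖y‖ ^ 2) ≤ 1 + r ^ 2 * h (r⁻¹ • y) := by
  have hscale : c * ‖y‖ ^ 2 ≤ r ^ 2 * h (r⁻¹ • y) := by
    calc c * ‖y‖ ^ 2 = r ^ 2 * (c * ‖r⁻¹ • y‖ ^ 2) := by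
          rw [norm_smul, mul_pow, norm_inv, inv_pow, Real.norm_eq_abs, sq_abs]
          field_simp
      _ ≤ r ^ 2 * h (r⁻¹ • y) := by gcongr; exact hlow _ hy
  calc min 1 c * (1 + ‖y‖ ^ 2) = min 1 c + min 1 c * ‖y‖ ^ 2 := by ring
    _ ≤ 1 + c * ‖y‖ ^ 2 := by
        gcongr
        · exact min_le_left _ _
        · exact min_le_right _ _
    _ ≤ 1 + r ^ 2 * h (r⁻¹ • y) := by gcongr

theorem exists_normalizedJacobi_sq_comp_le {α : ℝ} (hα : 1 / 2 ≤ α) {K : Set E} {h : E → ℝ}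
    {c δ : ℝ} (hc : 0 < c) (hδ : 0 < δ) (hlow : ∀ ξ ∈ K, c * ‖ξ‖ ^ 2 ≤ h ξ)
    (hup : ∀ ξ ∈ K, h ξ ≤ 1 - δ) :
    ∃ C, ∀ n : ℕ, n ≠ 0 → ∀ y, (n : ℝ)⁻¹ • y ∈ K →
      (normalizedJacobi α n).eval (h ((n : ℝ)⁻¹ • y)) ^ 2 ≤
        C * (1 + ‖y‖ ^ 2) ^ (-(2 * α + 1) / 2) := by
  obtain ⟨C, hC⟩ := exists_normalizedJacobi_sq_mul_le hα hδ
  refine ⟨C * min 1 c ^ (-(2 * α + 1) / 2), fun n hn y hy ↦ ?_⟩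
  have hnonneg : 0 ≤ h ((n : ℝ)⁻¹ • y) := le_trans (by positivity) (hlow _ hy)
  have hbound := hC n _ ⟨hnonneg, hup _ hy⟩
  have hexp : -(2 * α + 1) / 2 = -(α + 1 / 2) := by ring
  set w := 1 + (n : ℝ) ^ 2 * h ((n : ℝ)⁻¹ • y)
  have hw0 : 0 < w := by positivity
  have hC0 : 0 ≤ C := le_trans (by positivity) hbound
  calc (normalizedJacobi α n).eval (h ((n : ℝ)⁻¹ • y)) ^ 2 ≤ C * w ^ (-(α + 1 / 2)) := by
        rwa [Real.rpow_neg hw0.le, ← div_eq_mul_inv, le_div_iff₀ (by positivity)]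
    _ ≤ C * (min 1 c * (1 + ‖y‖ ^ 2)) ^ (-(α + 1 / 2)) := by
        exact mul_le_mul_of_nonneg_left (Real.rpow_le_rpow_of_nonpos (by positivity)
          (mul_one_add_norm_sq_le hlow (by positivity) hy) (by linarith)) hC0
    _ = C * min 1 c ^ (-(2 * α + 1) / 2) * (1 + ‖y‖ ^ 2) ^ (-(2 * α + 1) / 2) := by
        rw [Real.mul_rpow (by positivity) (by positivity), hexp, mul_assoc]

variable [FiniteDimensional ℝ E] [MeasurableSpace E] [BorelSpace E]

theorem tendsto_pow_mul_setIntegral_normalizedJacobi_sq (μ : Measure E) [μ.IsAddHaarMeasure]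
    {α : ℝ} (hα : 1 / 2 ≤ α) (hdim : Module.finrank ℝ E < 2 * α + 1) {K : Set E}
    (hK : MeasurableSet K) (hK0 : K ∈ 𝓝 0) {h q : E → ℝ} (hh : Measurable h) {c δ : ℝ}
    (hc : 0 < c) (hδ : 0 < δ) (hlow : ∀ ξ ∈ K, c * ‖ξ‖ ^ 2 ≤ h ξ) (hup : ∀ ξ ∈ K, h ξ ≤ 1 - δ)
    (hlim : ∀ y, Tendsto (fun n : ℕ ↦ (n : ℝ) ^ 2 * h ((n : ℝ)⁻¹ • y)) atTop (𝓝 (q y))) :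
    Tendsto (fun n : ℕ ↦ (n : ℝ) ^ Module.finrank ℝ E *
      ∫ ξ in K, (normalizedJacobi α n).eval (h ξ) ^ 2 ∂μ) atTop
      (𝓝 (∫ y, besselClifford α (q y) ^ 2 ∂μ)) := by
  obtain ⟨C, hC⟩ := exists_normalizedJacobi_sq_comp_le hα hc hδ hlow hup
  let g (n : ℕ) : E → ℝ := K.indicator fun ξ ↦ (normalizedJacobi α n).eval (h ξ) ^ 2
  have hg (n : ℕ) : Measurable (g n) :=
    (((normalizedJacobi α n).continuous.measurable.comp hh).pow_const 2).indicator hK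
  have hsubst (n : ℕ) : ∫ y, g n ((n : ℝ)⁻¹ • y) ∂μ = (n : ℝ) ^ Module.finrank ℝ E *
      ∫ ξ in K, (normalizedJacobi α n).eval (h ξ) ^ 2 ∂μ := by
    rw [Measure.integral_comp_inv_smul_of_nonneg μ _ n.cast_nonneg, integral_indicator hK,
      smul_eq_mul]
  simp_rw [← hsubst]
  refine tendsto_integral_filter_of_dominated_convergence
    (fun y ↦ |C| * (1 + ‖y‖ ^ 2) ^ (-(2 * α + 1) / 2))
    (Eventually.of_forall fun n ↦ ((hg n).comp (measurable_const_smul _)).aestronglyMeasurable)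
    ?_ ((integrable_rpow_neg_one_add_norm_sq hdim).const_mul _) (Eventually.of_forall fun y ↦ ?_)
  · filter_upwards [eventually_ne_atTop 0] with n hn
    refine Eventually.of_forall fun y ↦ ?_
    by_cases hy : (n : ℝ)⁻¹ • y ∈ K
    · simp only [g, Set.indicator_of_mem hy, norm_pow, Real.norm_eq_abs, sq_abs]
      exact (hC n hn y hy).trans (by gcongr; exact le_abs_self C)
    · simp only [g, Set.indicator_of_notMem hy, norm_zero]
      positivity
  · refine ((tendsto_eval_normalizedJacobi (by linarith) (hlim y)).pow 2).congr' ?_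
    filter_upwards [(tendsto_inv_natCast_smul y).eventually_mem hK0] with n hn
    simp only [g, Set.indicator_of_mem hn]

end ScalingLimit

section LatticeFourier

variable {d : ℕ}

/-- The character `v ↦ e^{i⟨ξ, v⟩}` of the lattice `ℤ^d` with frequency `ξ`. -/
def latticeChar (ξ : Fin d → ℝ) (v : Fin d → ℤ) : ℂ :=
  Complex.exp (Complex.I * ((∑ i, ξ i * (v i : ℝ) : ℝ) : ℂ))

/-- The cube `[-π, π]^d`, a fundamental domain of `(ℝ / 2πℤ)^d` up to its boundary. -/
def frequencyCube (d : ℕ) : Set (Fin d → ℝ) :=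
  Set.univ.pi fun _ ↦ Set.Icc (-π) π

theorem isCompact_frequencyCube : IsCompact (frequencyCube d) :=
  isCompact_univ_pi fun _ ↦ isCompact_Icc

theorem frequencyCube_mem_nhds_zero : frequencyCube d ∈ 𝓝 0 :=
  set_pi_mem_nhds Set.finite_univ fun _ _ ↦
    Icc_mem_nhds (neg_lt_zero.2 Real.pi_pos) Real.pi_pos

theorem continuous_latticeChar (v : Fin d → ℤ) : Continuous fun ξ ↦ latticeChar ξ v := by
  unfold latticeChar
  fun_prop

theorem latticeChar_add (ξ : Fin d → ℝ) (v w : Fin d → ℤ) :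
    latticeChar ξ (v + w) = latticeChar ξ v * latticeChar ξ w := by
  simp only [latticeChar, Pi.add_apply, Int.cast_add, mul_add, Finset.sum_add_distrib,
    Complex.ofReal_add, Complex.exp_add]

theorem latticeChar_neg (ξ : Fin d → ℝ) (v : Fin d → ℤ) :
    latticeChar ξ (-v) = starRingEnd ℂ (latticeChar ξ v) := by
  rw [latticeChar, latticeChar, ← Complex.exp_conj]
  simp

theorem latticeChar_re (ξ : Fin d → ℝ) (v : Fin d → ℤ) :
    (latticeChar ξ v).re = cos (∑ i, ξ i * (v i : ℝ)) := by
  rw [latticeChar, mul_comm, Complex.exp_ofReal_mul_I_re]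

theorem integral_exp_I_mul_intCast (k : ℤ) :
    ∫ t in Set.Icc (-π) π, Complex.exp (Complex.I * (t * k)) = if k = 0 then 2 * π else 0 := by
  rw [integral_Icc_eq_integral_Ioc,
    ← intervalIntegral.integral_of_le (by linarith [Real.pi_pos])]
  split_ifs with hk
  · simp [hk, two_mul]
  · have hIk : Complex.I * k ≠ 0 := by simp [hk]
    have hperiod : Complex.exp (Complex.I * k * π) = Complex.exp (Complex.I * k * (-π : ℝ)) :=
      Complex.exp_eq_exp_iff_exists_int.2 ⟨k, by push_cast; ring⟩
    simp_rw [mul_comm _ (k : ℂ), ← mul_assoc]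
    rw [integral_exp_mul_complex hIk, hperiod, sub_self, zero_div, Complex.ofReal_zero]

theorem setIntegral_frequencyCube_latticeChar (v : Fin d → ℤ) :
    ∫ ξ in frequencyCube d, latticeChar ξ v = if v = 0 then (2 * π : ℂ) ^ d else 0 := by
  have hprod (ξ : Fin d → ℝ) :
      latticeChar ξ v = ∏ i, Complex.exp (Complex.I * (ξ i * v i)) := by
    simp [latticeChar, ← Complex.exp_sum, Finset.mul_sum]
  simp_rw [hprod]
  rw [frequencyCube, volume_pi, Measure.restrict_pi_pi, integral_fintype_prod_eq_prod
    (fun i (t : ℝ) ↦ Complex.exp (Complex.I * (t * v i)))]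
  simp_rw [integral_exp_I_mul_intCast]
  split_ifs with hv
  · simp [hv]
  · obtain ⟨i, hi⟩ := Function.ne_iff.1 hv
    exact Finset.prod_eq_zero (Finset.mem_univ i) (by simpa using hi)

theorem ftOmega_eq_sum {f : (Fin d → ℤ) → ℝ} (hf : f.support.Finite) (ξ : Fin d → ℝ) :
    ftOmega f ξ = ∑ v ∈ hf.toFinset, (f v : ℂ) * latticeChar ξ v :=
  tsum_eq_sum fun v hv ↦ by simp_all

theorem summable_mul_latticeChar {f : (Fin d → ℤ) → ℝ} (hf : f.support.Finite)
    (ξ : Fin d → ℝ) : Summable fun v ↦ (f v : ℂ) * latticeChar ξ v :=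
  summable_of_hasFiniteSupport (hf.subset fun v hv ↦ by simp_all)

theorem latticeConv_eq_sum (f : (Fin d → ℤ) → ℝ) {g : (Fin d → ℤ) → ℝ} (hg : g.support.Finite)
    (v : Fin d → ℤ) : latticeConv f g v = ∑ w ∈ hg.toFinset, f (v - w) * g w :=
  tsum_eq_sum fun w hw ↦ by simp_all

theorem finite_support_latticeConv {f g : (Fin d → ℤ) → ℝ} (hf : f.support.Finite)
    (hg : g.support.Finite) : (latticeConv f g).support.Finite := by
  refine (hf.add hg).subset fun v hv ↦ ?_
  rw [Function.mem_support, latticeConv_eq_sum f hg] at hv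
  obtain ⟨w, -, hw⟩ := Finset.exists_ne_zero_of_sum_ne_zero hv
  exact ⟨v - w, left_ne_zero_of_mul hw, w, right_ne_zero_of_mul hw, sub_add_cancel v w⟩

theorem ftOmega_latticeConv {f g : (Fin d → ℤ) → ℝ} (hf : f.support.Finite)
    (hg : g.support.Finite) (ξ : Fin d → ℝ) :
    ftOmega (latticeConv f g) ξ = ftOmega f ξ * ftOmega g ξ := by
  have hshift (w : Fin d → ℤ) :
      HasSum (fun v ↦ (f (v - w) : ℂ) * latticeChar ξ (v - w)) (ftOmega f ξ) :=
    (Equiv.hasSum_iff (Equiv.subRight w)).2 (summable_mul_latticeChar hf ξ).hasSum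
  rw [ftOmega_eq_sum hg, Finset.mul_sum,
    ← (hasSum_sum fun w _ ↦ (hshift w).mul_right ((g w : ℂ) * latticeChar ξ w)).tsum_eq]
  refine tsum_congr fun v ↦ ?_
  rw [latticeConv_eq_sum f hg, Complex.ofReal_sum, Finset.sum_mul]
  refine Finset.sum_congr rfl fun w _ ↦ ?_
  rw [mul_mul_mul_comm, ← latticeChar_add, sub_add_cancel, Complex.ofReal_mul]
  rfl

theorem ftOmega_single_zero (ξ : Fin d → ℝ) : ftOmega (Pi.single 0 1) ξ = 1 := by
  rw [ftOmega, tsum_eq_single 0 fun v hv ↦ by simp [hv]]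
  simp

theorem ftOmega_add {f g : (Fin d → ℤ) → ℝ} (hf : f.HasFiniteSupport) (hg : g.HasFiniteSupport)
    (ξ : Fin d → ℝ) : ftOmega (fun v ↦ f v + g v) ξ = ftOmega f ξ + ftOmega g ξ := by
  refine Eq.trans (tsum_congr fun v ↦ ?_)
    ((summable_mul_latticeChar hf ξ).tsum_add (summable_mul_latticeChar hg ξ))
  simp only [Complex.ofReal_add, add_mul, latticeChar]

theorem ftOmega_sub {f g : (Fin d → ℤ) → ℝ} (hf : f.HasFiniteSupport) (hg : g.HasFiniteSupport)
    (ξ : Fin d → ℝ) : ftOmega (fun v ↦ f v - g v) ξ = ftOmega f ξ - ftOmega g ξ := by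
  refine Eq.trans (tsum_congr fun v ↦ ?_)
    ((summable_mul_latticeChar hf ξ).tsum_sub (summable_mul_latticeChar hg ξ))
  simp only [Complex.ofReal_sub, sub_mul, latticeChar]

theorem ftOmega_const_mul (a : ℝ) (f : (Fin d → ℤ) → ℝ) (ξ : Fin d → ℝ) :
    ftOmega (fun v ↦ a * f v) ξ = a * ftOmega f ξ := by
  simp only [ftOmega, Complex.ofReal_mul, mul_assoc, tsum_mul_left]

theorem ftOmega_eq_ofReal_re {f : (Fin d → ℤ) → ℝ} (hsymm : ∀ v, f (-v) = f v)
    (ξ : Fin d → ℝ) : ftOmega f ξ = (ftOmega f ξ).re := by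
  refine (Complex.conj_eq_iff_re.1 ?_).symm
  change starRingEnd ℂ (∑' v, (f v : ℂ) * latticeChar ξ v) = ∑' v, (f v : ℂ) * latticeChar ξ v
  rw [Complex.conj_tsum, ← (Equiv.neg (Fin d → ℤ)).tsum_eq]
  simp [hsymm, latticeChar_neg]

theorem setIntegral_frequencyCube_norm_ftOmega_sq {f : (Fin d → ℤ) → ℝ}
    (hf : f.support.Finite) :
    ∫ ξ in frequencyCube d, ‖ftOmega f ξ‖ ^ 2 = (2 * π) ^ d * ∑' v, f v ^ 2 := by
  have hexpand (ξ : Fin d → ℝ) : ((‖ftOmega f ξ‖ ^ 2 : ℝ) : ℂ) =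
      ∑ v ∈ hf.toFinset, ∑ w ∈ hf.toFinset, (f v * f w : ℂ) * latticeChar ξ (v - w) := by
    rw [Complex.ofReal_pow, ← Complex.mul_conj', ftOmega_eq_sum hf, map_sum, Finset.sum_mul_sum]
    refine Finset.sum_congr rfl fun v _ ↦ Finset.sum_congr rfl fun w _ ↦ ?_
    rw [map_mul, Complex.conj_ofReal, ← latticeChar_neg, mul_mul_mul_comm, ← latticeChar_add,
      sub_eq_add_neg]
  have hint (a : ℂ) (v : Fin d → ℤ) :
      Integrable (fun ξ ↦ a * latticeChar ξ v) (volume.restrict (frequencyCube d)) :=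
    (continuous_const.mul (continuous_latticeChar v)).continuousOn.integrableOn_compact
      isCompact_frequencyCube
  have hcomplex : ((∫ ξ in frequencyCube d, ‖ftOmega f ξ‖ ^ 2 : ℝ) : ℂ) =
      ((2 * π) ^ d * ∑ v ∈ hf.toFinset, f v ^ 2 : ℝ) := by
    simp_rw [← integral_complex_ofReal, hexpand]
    rw [integral_finsetSum _ fun v _ ↦ integrable_finsetSum _ fun w _ ↦ hint _ _]
    push_cast
    rw [Finset.mul_sum]
    refine Finset.sum_congr rfl fun v hv ↦ ?_
    rw [integral_finsetSum _ fun w _ ↦ hint _ _]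
    simp only [integral_const_mul, setIntegral_frequencyCube_latticeChar, sub_eq_zero, mul_ite,
      mul_zero, Finset.sum_ite_eq, if_pos hv]
    ring
  rw [tsum_eq_sum (s := hf.toFinset) fun v hv ↦ by simp_all]
  exact_mod_cast hcomplex

/-- `x` is the Jacobi polynomial iteration driven by the kernel `ω`, started at the origin. -/
structure IsJacobiIteration (ω : (Fin d → ℤ) → ℝ) (x : ℕ → (Fin d → ℤ) → ℝ) : Prop where
  zero (v : Fin d → ℤ) : x 0 v = if v = 0 then 1 else 0
  one (v : Fin d → ℤ) : x 1 v = aCoef0 d * latticeConv ω (x 0) v + bCoef0 d * x 0 v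
  succ (n : ℕ) (hn : 1 ≤ n) (v : Fin d → ℤ) : x (n + 1) v =
    aCoef d n * latticeConv ω (x n) v + bCoef d n * x n v - cCoef d n * x (n - 1) v

namespace IsJacobiIteration

variable {ω : (Fin d → ℤ) → ℝ} {x : ℕ → (Fin d → ℤ) → ℝ}

theorem eq_zero (hx : IsJacobiIteration ω x) : x 0 = Pi.single 0 1 := by
  ext v
  rw [hx.zero, Pi.single_apply]

theorem finite_support (hx : IsJacobiIteration ω x) (hω : ω.support.Finite) (n : ℕ) :
    (x n).HasFiniteSupport := by
  have hzero : (x 0).HasFiniteSupport := by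
    rw [hx.eq_zero]
    exact (Set.finite_singleton 0).subset Pi.support_single_subset
  induction n using Nat.twoStepInduction with
  | zero => exact hzero
  | one =>
    have hconv : (latticeConv ω (x 0)).HasFiniteSupport := finite_support_latticeConv hω hzero
    rw [funext hx.one]
    fun_prop
  | more n ih ih' =>
    have hconv : (latticeConv ω (x (n + 1))).HasFiniteSupport :=
      finite_support_latticeConv hω ih'
    rw [funext (hx.succ (n + 1) n.succ_pos), Nat.add_sub_cancel]
    fun_prop

theorem ftOmega_eq (hx : IsJacobiIteration ω x) (hω : ω.support.Finite)
    (hsymm : ∀ v, ω (-v) = ω v) (n : ℕ) (ξ : Fin d → ℝ) :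
    ftOmega (x n) ξ =
      ((normalizedJacobi (d / 2) n).eval ((1 - (ftOmega ω ξ).re) / 2) : ℝ) := by
  have hfin := hx.finite_support hω
  have hconv (n : ℕ) : (latticeConv ω (x n)).HasFiniteSupport :=
    finite_support_latticeConv hω (hfin n)
  have hmul (n : ℕ) : ftOmega (latticeConv ω (x n)) ξ = (ftOmega ω ξ).re * ftOmega (x n) ξ := by
    rw [ftOmega_latticeConv hω (hfin n), ← ftOmega_eq_ofReal_re hsymm]
  have hzero : ftOmega (x 0) ξ = 1 := by rw [hx.eq_zero, ftOmega_single_zero]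
  induction n using Nat.twoStepInduction with
  | zero => simp [hzero, normalizedJacobi_zero]
  | one =>
    rw [funext hx.one, ftOmega_add (by fun_prop) (by fun_prop), ftOmega_const_mul,
      ftOmega_const_mul, hmul, hzero, normalizedJacobi_one]
    simp only [Polynomial.eval_add, Polynomial.eval_sub, Polynomial.eval_mul, Polynomial.eval_C,
      Polynomial.eval_X, Polynomial.eval_one, Polynomial.eval_ofNat]
    push_cast
    ring
  | more n ih ih' =>
    rw [funext (hx.succ (n + 1) n.succ_pos), Nat.add_sub_cancel,
      ftOmega_sub (by fun_prop) (by fun_prop), ftOmega_add (by fun_prop) (by fun_prop),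
      ftOmega_const_mul, ftOmega_const_mul, ftOmega_const_mul, hmul, ih, ih',
      normalizedJacobi_add_two]
    simp only [Polynomial.eval_add, Polynomial.eval_sub, Polynomial.eval_mul, Polynomial.eval_C,
      Polynomial.eval_X, Polynomial.eval_one, Polynomial.eval_ofNat]
    push_cast
    ring

theorem tsum_sq_eq (hx : IsJacobiIteration ω x) (hω : ω.support.Finite)
    (hsymm : ∀ v, ω (-v) = ω v) (n : ℕ) :
    ∑' v, x n v ^ 2 = ((2 * π) ^ d)⁻¹ * ∫ ξ in frequencyCube d,
      (normalizedJacobi (d / 2) n).eval ((1 - (ftOmega ω ξ).re) / 2) ^ 2 := by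
  rw [eq_inv_mul_iff_mul_eq₀ (by positivity),
    ← setIntegral_frequencyCube_norm_ftOmega_sq (hx.finite_support hω n)]
  simp_rw [hx.ftOmega_eq hω hsymm, Complex.norm_real, Real.norm_eq_abs, sq_abs]

end IsJacobiIteration

end LatticeFourier

section Symbol

theorem isLittleO_one_sub_cos_sub_sq_div_two :
    (fun t ↦ 1 - cos t - t ^ 2 / 2) =o[𝓝 0] fun t : ℝ ↦ t ^ 2 := by
  have hquartic : (fun t ↦ 1 - cos t - t ^ 2 / 2) =O[𝓝 0] fun t : ℝ ↦ t ^ 4 := by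
    refine Asymptotics.IsBigO.of_bound (5 / 96) ?_
    filter_upwards [Metric.closedBall_mem_nhds (0 : ℝ) one_pos] with t ht
    rw [mem_closedBall_zero_iff, Real.norm_eq_abs] at ht
    calc ‖1 - cos t - t ^ 2 / 2‖ = |cos t - (1 - t ^ 2 / 2)| := by
          rw [Real.norm_eq_abs, ← abs_neg]
          ring_nf
      _ ≤ 5 / 96 * ‖t ^ 4‖ := by
          rw [mul_comm, norm_pow, Real.norm_eq_abs]
          exact Real.cos_bound ht
  exact hquartic.trans_isLittleO (Asymptotics.isLittleO_pow_pow (by norm_num))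

variable {d : ℕ} {ω : (Fin d → ℤ) → ℝ}

theorem re_ftOmega_eq_sum (hω : ω.support.Finite) (ξ : Fin d → ℝ) :
    (ftOmega ω ξ).re = ∑ v ∈ hω.toFinset, ω v * cos (∑ i, ξ i * (v i : ℝ)) := by
  simp only [ftOmega_eq_sum hω, Complex.re_sum, Complex.re_ofReal_mul, latticeChar_re]

theorem continuous_re_ftOmega (hω : ω.support.Finite) :
    Continuous fun ξ ↦ (ftOmega ω ξ).re := by
  simp_rw [re_ftOmega_eq_sum hω]
  fun_prop

theorem one_sub_re_ftOmega_eq_sum (hω : ω.support.Finite) (hmass : ∑' v, ω v = 1)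
    (ξ : Fin d → ℝ) : 1 - (ftOmega ω ξ).re =
      ∑ v ∈ hω.toFinset, ω v * (1 - cos (∑ i, ξ i * (v i : ℝ))) := by
  have hsum : ∑ v ∈ hω.toFinset, ω v = 1 := by
    rw [← hmass, tsum_eq_sum (s := hω.toFinset) fun v hv ↦ by simpa using hv]
  simp only [re_ftOmega_eq_sum hω, mul_sub, mul_one, Finset.sum_sub_distrib, hsum]

theorem dotProduct_covQ_mulVec (hω : ω.support.Finite) (y : Fin d → ℝ) :
    y ⬝ᵥ (covQ d ω *ᵥ y) = ∑ v ∈ hω.toFinset, ω v * (∑ i, y i * (v i : ℝ)) ^ 2 := by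
  have hentry (i j : Fin d) :
      covQ d ω i j = ∑ v ∈ hω.toFinset, ω v * (v i : ℝ) * (v j : ℝ) :=
    tsum_eq_sum fun v hv ↦ by simp_all
  calc y ⬝ᵥ (covQ d ω *ᵥ y)
      = ∑ i, ∑ j, ∑ v ∈ hω.toFinset, ω v * ((y i * v i) * (y j * v j)) := by
        simp only [dotProduct, mulVec, hentry, Finset.sum_mul, Finset.mul_sum]
        congr! 3
        ring
    _ = ∑ v ∈ hω.toFinset, ∑ i, ∑ j, ω v * ((y i * v i) * (y j * v j)) := by
        rw [Finset.sum_comm_cycle]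
    _ = ∑ v ∈ hω.toFinset, ω v * (∑ i, y i * (v i : ℝ)) ^ 2 := by
        simp only [sq, Finset.sum_mul_sum, ← Finset.mul_sum]

theorem isLittleO_one_sub_re_ftOmega (hω : ω.support.Finite) (hmass : ∑' v, ω v = 1) :
    ((fun ξ ↦ 1 - (ftOmega ω ξ).re) - fun ξ ↦ ξ ⬝ᵥ (covQ d ω *ᵥ ξ) / 2) =o[𝓝 0]
      fun ξ ↦ ‖ξ‖ ^ 2 := by
  have hterm (v : Fin d → ℤ) :
      (fun ξ : Fin d → ℝ ↦ ω v * (1 - cos (∑ i, ξ i * (v i : ℝ)) -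
        (∑ i, ξ i * (v i : ℝ)) ^ 2 / 2)) =o[𝓝 0] fun ξ ↦ ‖ξ‖ ^ 2 := by
    have hcont : Continuous fun ξ : Fin d → ℝ ↦ ∑ i, ξ i * (v i : ℝ) := by fun_prop
    have hlin : (fun ξ : Fin d → ℝ ↦ ∑ i, ξ i * (v i : ℝ)) =O[𝓝 0] fun ξ ↦ ‖ξ‖ :=
      Asymptotics.IsBigO.fun_sum fun i _ ↦ by
        simpa [mul_comm] using
          (Asymptotics.isBigO_of_le (𝓝 0) fun ξ : Fin d → ℝ ↦
            norm_le_pi_norm ξ i).norm_right.const_mul_left (v i : ℝ)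
    exact ((isLittleO_one_sub_cos_sub_sq_div_two.comp_tendsto
      (by simpa using hcont.tendsto 0)).trans_isBigO (hlin.pow 2)).const_mul_left (ω v)
  refine (Asymptotics.IsLittleO.fun_sum fun v (_ : v ∈ hω.toFinset) ↦ hterm v).congr_left fun ξ ↦ ?_
  simp only [Pi.sub_apply, one_sub_re_ftOmega_eq_sum hω hmass, dotProduct_covQ_mulVec hω,
    Finset.sum_div, ← Finset.sum_sub_distrib]
  congr! 1
  ring

theorem exists_one_sub_re_ftOmega_le (hω : ω.support.Finite) (hmass : ∑' v, ω v = 1)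
    (haper : ∀ ξ ∈ frequencyCube d, ξ ≠ 0 → ‖ftOmega ω ξ‖ < 1) :
    ∃ δ > 0, ∀ ξ ∈ frequencyCube d, 1 - (ftOmega ω ξ).re ≤ 2 - δ := by
  obtain ⟨m, hm, hle⟩ := isCompact_frequencyCube.exists_forall_le' (a := -1)
    (continuous_re_ftOmega hω).continuousOn fun ξ hξ ↦ by
      obtain rfl | hξ0 := eq_or_ne ξ 0
      · have hone : (ftOmega ω 0).re = 1 := by
          have hsub : 1 - (ftOmega ω 0).re = 0 := by
            simp [one_sub_re_ftOmega_eq_sum hω hmass]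
          linarith
        linarith
      · exact neg_lt_of_abs_lt ((Complex.abs_re_le_norm _).trans_lt (haper ξ hξ hξ0))
  exact ⟨m + 1, by linarith, fun ξ hξ ↦ by linarith [hle ξ hξ]⟩

theorem exists_mul_norm_sq_le_one_sub_re_ftOmega (hω : ω.support.Finite)
    (hmass : ∑' v, ω v = 1) (hQ : (covQ d ω).PosDef)
    (haper : ∀ ξ ∈ frequencyCube d, ξ ≠ 0 → ‖ftOmega ω ξ‖ < 1) :
    ∃ c > 0, ∀ ξ ∈ frequencyCube d, c * ‖ξ‖ ^ 2 ≤ 1 - (ftOmega ω ξ).re := by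
  obtain ⟨c, hc, hle⟩ := exists_mul_norm_sq_le_of_homogeneous
    (q := fun ξ ↦ ξ ⬝ᵥ (covQ d ω *ᵥ ξ) / 2)
    (by simp only [dotProduct, mulVec]; fun_prop)
    (fun t ξ ↦ by rw [smul_dotProduct_mulVec_smul, mul_div_assoc])
    fun ξ hξ ↦ half_pos (by simpa using hQ.dotProduct_mulVec_pos hξ)
  exact exists_mul_norm_sq_le_of_isLittleO isCompact_frequencyCube
    (continuous_const.sub (continuous_re_ftOmega hω)).continuousOn
    (fun ξ hξ hξ0 ↦ sub_pos.2 ((Complex.re_le_norm _).trans_lt (haper ξ hξ hξ0)))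
    hc hle (isLittleO_one_sub_re_ftOmega hω hmass)

theorem tendsto_sq_mul_one_sub_re_ftOmega (hω : ω.support.Finite) (hmass : ∑' v, ω v = 1)
    (y : Fin d → ℝ) :
    Tendsto (fun n : ℕ ↦ (n : ℝ) ^ 2 * ((1 - (ftOmega ω ((n : ℝ)⁻¹ • y)).re) / 2)) atTop
      (𝓝 (y ⬝ᵥ (covQ d ω *ᵥ y) / 4)) := by
  have hlim := (tendsto_sq_mul_comp_inv_smul
    (fun t ξ ↦ by rw [smul_dotProduct_mulVec_smul, mul_div_assoc])
    (isLittleO_one_sub_re_ftOmega hω hmass) y).div_const 2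
  convert! hlim using 2
  · ring
  · ring

theorem tendsto_pow_mul_setIntegral_normalizedJacobi_symbol_sq (hd : 1 ≤ d)
    (hω : ω.support.Finite) (hmass : ∑' v, ω v = 1) (hQ : (covQ d ω).PosDef)
    (haper : ∀ ξ ∈ frequencyCube d, ξ ≠ 0 → ‖ftOmega ω ξ‖ < 1) :
    Tendsto (fun n : ℕ ↦ (n : ℝ) ^ d * ∫ ξ in frequencyCube d,
      (normalizedJacobi (d / 2) n).eval ((1 - (ftOmega ω ξ).re) / 2) ^ 2) atTop
      (𝓝 (∫ y, besselClifford (d / 2) (y ⬝ᵥ (covQ d ω *ᵥ y) / 4) ^ 2)) := by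
  obtain ⟨c, hc, hlow⟩ := exists_mul_norm_sq_le_one_sub_re_ftOmega hω hmass hQ haper
  obtain ⟨δ, hδ, hup⟩ := exists_one_sub_re_ftOmega_le hω hmass haper
  have hd' : (1 : ℝ) ≤ d := mod_cast hd
  have hlim := tendsto_pow_mul_setIntegral_normalizedJacobi_sq (E := Fin d → ℝ) volume
    (α := d / 2) (by linarith) (by rw [Module.finrank_fin_fun]; linarith)
    isCompact_frequencyCube.measurableSet frequencyCube_mem_nhds_zero
    (h := fun ξ ↦ (1 - (ftOmega ω ξ).re) / 2)
    ((continuous_const.sub (continuous_re_ftOmega hω)).div_const 2).measurable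
    (half_pos hc) (half_pos hδ)
    (fun ξ hξ ↦ by linarith [hlow ξ hξ]) (fun ξ hξ ↦ by linarith [hup ξ hξ])
    (tendsto_sq_mul_one_sub_re_ftOmega hω hmass)
  rwa [Module.finrank_fin_fun] at hlim

end Symbol

theorem integral_besselClifford_quadraticForm_sq {ι : Type*} [Fintype ι] [DecidableEq ι]
    [Nonempty ι] {Q : Matrix ι ι ℝ} (hQ : Q.PosDef) :
    ∫ y : ι → ℝ, besselClifford (Fintype.card ι / 2) (y ⬝ᵥ (Q *ᵥ y) / 4) ^ 2 =
      (2 * π) ^ Fintype.card ι * (Gamma (Fintype.card ι / 2 + 1) /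
        (π ^ (Fintype.card ι / 2 : ℝ) * √Q.det)) := by
  have hpow : π ^ (Fintype.card ι / 2 : ℝ) = √π ^ Fintype.card ι := by
    rw [Real.sqrt_eq_rpow, ← Real.rpow_mul_natCast Real.pi_pos.le, one_div_mul_eq_div]
  rw [integral_comp_quadraticForm hQ (fun t ↦ besselClifford (Fintype.card ι / 2) (t / 4) ^ 2),
    integral_besselClifford_norm_sq, volume_real_unitBall, hpow, smul_eq_mul]
  field_simp

theorem jacobi_iteration_sharp_rate_general {d : ℕ} (hd : 1 ≤ d) {ω : (Fin d → ℤ) → ℝ}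
    (hω : ω.support.Finite) (hmass : ∑' v, ω v = 1) (hsymm : ∀ v, ω (-v) = ω v)
    (hQ : (covQ d ω).PosDef)
    (haper : ∀ ξ ∈ frequencyCube d, ξ ≠ 0 → ‖ftOmega ω ξ‖ < 1)
    {x : ℕ → (Fin d → ℤ) → ℝ} (hx : IsJacobiIteration ω x) :
    Tendsto (fun n : ℕ ↦ (n : ℝ) ^ d * ∑' v, x n v ^ 2) atTop
      (𝓝 (Gamma (d / 2 + 1) / (π ^ (d / 2 : ℝ) * √(covQ d ω).det))) := by
  have : Nonempty (Fin d) := ⟨⟨0, hd⟩⟩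
  have hlimit := integral_besselClifford_quadraticForm_sq hQ
  rw [Fintype.card_fin] at hlimit
  have hscaled := (tendsto_pow_mul_setIntegral_normalizedJacobi_symbol_sq hd hω hmass hQ
    haper).const_mul ((2 * π) ^ d)⁻¹
  rw [hlimit, inv_mul_cancel_left₀ (by positivity)] at hscaled
  refine hscaled.congr fun n ↦ ?_
  rw [hx.tsum_sq_eq hω hsymm, mul_left_comm]

/-- Sharp asymptotic rate for the squared ℓ² norm of the Jacobi polynomial iteration. -/
theorem jacobi_iteration_sharp_rate
    (d : ℕ) (hd : 1 ≤ d) (ω : (Fin d → ℤ) → ℝ)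
    (hfin : (Function.support ω).Finite) (hnn : ∀ v, 0 ≤ ω v)
    (hmass : ∑' v : Fin d → ℤ, ω v = 1) (hsymm : ∀ v, ω (-v) = ω v)
    (hQ : (covQ d ω).PosDef)
    (haper : ∀ ξ : Fin d → ℝ, (∀ i, ξ i ∈ Set.Icc (-π) π) → ξ ≠ 0 →
      ‖ftOmega ω ξ‖ < 1)
    (x : ℕ → (Fin d → ℤ) → ℝ)
    (hx0 : ∀ v, x 0 v = if v = 0 then 1 else 0)
    (hx1 : ∀ v, x 1 v = aCoef0 d * latticeConv ω (x 0) v + bCoef0 d * x 0 v)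
    (hrec : ∀ n, 1 ≤ n → ∀ v,
      x (n + 1) v = aCoef d n * latticeConv ω (x n) v + bCoef d n * x n v - cCoef d n * x (n - 1) v) :
    Tendsto (fun n : ℕ => (n : ℝ) ^ d * ∑' v : Fin d → ℤ, (x n v) ^ 2)
      atTop
      (𝓝 (Real.Gamma ((d : ℝ) / 2 + 1) / (π ^ ((d : ℝ) / 2) * Real.sqrt (covQ d ω).det))) :=
  jacobi_iteration_sharp_rate_general hd hfin hmass hsymm hQ
    (fun ξ hξ ↦ haper ξ fun i ↦ hξ i trivial) ⟨hx0, hx1, hrec⟩
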